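/- Let Λ = KQ/⟨all paths of length L+1⟩ be a truncated path algebra over an algebraically closed field and d a dimension vector. Then: (1) the map Γ_• : Rep_d(Λ) → ℕ, x ↦ Γ(M_x), is upper semicontinuous (the set {x : Γ(M_x) ≥ m} is closed for every m); and (2) for a realizable semisimple sequence S of dimension vector d, the following are equivalent: (i) the closure of Rep S is an irreducible component of Rep_d(Λ); (ii) there exists x ∈ Rep S with Γ(M_x) = 1; (iii) there exists a module G with radical layering S such that the radical filtration G ⊇ JG ⊇ ⋯ ⊇ J^{L+1}G = 0 is the only submodule filtration of G governed by a realizable semisimple sequence. -/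

import Mathlib

open Finset

/-! # Varieties of representations of a quiver with relations: basic setup -/

/-- The Zariski topology on the affine space `ι → K`: it is generated by the basic open
sets `D(p) = {x | p(x) ≠ 0}`, where `p` ranges over multivariate polynomials. -/
def zariskiTopology (ι K : Type) [CommSemiring K] : TopologicalSpace (ι → K) :=
  TopologicalSpace.generateFrom
    {U | ∃ p : MvPolynomial ι K, U = {x | MvPolynomial.eval x p ≠ 0}}

/-- A finite quiver `Q`: vertices `Fin n`, arrows `Fin numArrows` with source and
target maps. -/
structure QuiverData where
  n : ℕ
  numArrows : ℕ
  src : Fin numArrows → Fin n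
  tgt : Fin numArrows → Fin n

namespace QuiverData

variable (Q : QuiverData) (d : Fin Q.n → ℕ) (K : Type) [Field K]

/-- Index of the coordinates of the affine space of `d`-dimensional representations:
for each arrow `a` a matrix entry index in `Fin (d (tgt a)) × Fin (d (src a))`. -/
abbrev Coords := Σ a : Fin Q.numArrows, Fin (d (Q.tgt a)) × Fin (d (Q.src a))

/-- The affine space of `d`-dimensional representations of `Q`:
a point `x` assigns to each arrow `a` a `d (tgt a) × d (src a)` matrix over `K`. -/
abbrev RepSpace := Coords Q d → K

/-- `RepSpace` carries the Zariski topology. -/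
noncomputable instance instRepTop : TopologicalSpace (RepSpace Q d K) :=
  zariskiTopology (Coords Q d) K

/-- The underlying `K`-vector space `⊕ᵢ K^{dᵢ}` of any `d`-dimensional representation. -/
abbrev Carrier := (Σ i : Fin Q.n, Fin (d i)) → K

/-- The projection onto the component of the `i`-th vertex (action of the primitive
idempotent `eᵢ`). -/
def proj (i : Fin Q.n) : Carrier Q d K →ₗ[K] Carrier Q d K where
  toFun m := fun jv => if jv.1 = i then m jv else 0
  map_add' u v := by
    funext jv; by_cases h : jv.1 = i <;> simp [h]
  map_smul' c u := by
    funext jv; by_cases h : jv.1 = i <;> simp [h]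

/-- The action of the arrow `a` on the carrier space of the representation `x`. -/
noncomputable def arrowMap (x : RepSpace Q d K) (a : Fin Q.numArrows) :
    Carrier Q d K →ₗ[K] Carrier Q d K where
  toFun m := fun jv =>
    if h : jv.1 = Q.tgt a then
      ∑ w : Fin (d (Q.src a)), x ⟨a, (Fin.cast (congrArg d h) jv.2, w)⟩ * m ⟨Q.src a, w⟩
    else 0
  map_add' u v := by
    funext jv
    by_cases h : jv.1 = Q.tgt a <;> simp [h, mul_add, Finset.sum_add_distrib]
  map_smul' c u := by
    funext jv
    by_cases h : jv.1 = Q.tgt a <;>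
      simp [h, Finset.mul_sum, mul_comm, mul_left_comm, mul_assoc]

/-- The action of a word `w = [a_k, …, a_1]` of arrows on the representation `x`
(the arrow `a_1` acts first; non-composable words act as `0`). -/
noncomputable def wordMap (x : RepSpace Q d K) (w : List (Fin Q.numArrows)) :
    Module.End K (Carrier Q d K) :=
  (w.map fun a => (arrowMap Q d K x a : Module.End K (Carrier Q d K))).prod

/-- The submodule `J^l · M_x` of the module `M_x`: the sum of the images of all words of
arrows of length `l` (for an admissible ideal, the radical acts through the arrows). -/
noncomputable def radPow (x : RepSpace Q d K) (l : ℕ) : Submodule K (Carrier Q d K) :=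
  ⨆ w : {w : List (Fin Q.numArrows) // w.length = l},
    LinearMap.range (wordMap Q d K x w.1)

/-- The socle series of `M_x`: `socPow x l = soc_l(M_x)`. -/
noncomputable def socPow (x : RepSpace Q d K) : ℕ → Submodule K (Carrier Q d K)
  | 0 => ⨅ a, LinearMap.ker (arrowMap Q d K x a)
  | (l+1) => ⨅ a, (socPow x l).comap (arrowMap Q d K x a)

/-- The dimension, at the vertex `i`, of a (vertex-graded) subspace `N`. -/
noncomputable def vdim (N : Submodule K (Carrier Q d K)) (i : Fin Q.n) : ℕ :=
  Module.finrank K (N.map (proj Q d K i))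

/-- The radical layering `S(M_x) = (M/JM, JM/J²M, …, J^L M/J^{L+1} M)` of the module `M_x`,
recorded through the dimension vectors of its semisimple layers. -/
noncomputable def radLayering (L : ℕ) (x : RepSpace Q d K) :
    Fin (L+1) → Fin Q.n → ℕ :=
  fun l i => vdim Q d K (radPow Q d K x l) i - vdim Q d K (radPow Q d K x (l+1)) i

/-- The socle layering `S*(M_x) = (soc₀M, soc₁M/soc₀M, …)` of the module `M_x`, recorded
through the dimension vectors of its semisimple layers. -/
noncomputable def socLayering (L : ℕ) (x : RepSpace Q d K) :
    Fin (L+1) → Fin Q.n → ℕ :=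
  fun l i => vdim Q d K (socPow Q d K x l) i -
    (if (l : ℕ) = 0 then 0 else vdim Q d K (socPow Q d K x ((l : ℕ) - 1)) i)

end QuiverData

/-- The dominance order on semisimple sequences (recorded as sequences of dimension
vectors): `dominates S S'` means `S ≤ S'`, i.e. `⊕_{j≤l} S_j ⊆ ⊕_{j≤l} S'_j` for all `l`. -/
def dominates {n L : ℕ} (S S' : Fin (L+1) → Fin n → ℕ) : Prop :=
  ∀ (l : Fin (L+1)) (i : Fin n),
    ∑ j ∈ Finset.univ.filter (fun j => j ≤ l), S j i ≤
      ∑ j ∈ Finset.univ.filter (fun j => j ≤ l), S' j i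

/-- A semisimple sequence has dimension vector `d` if its layers' dimension vectors sum
to `d`. -/
def hasDimVec {n L : ℕ} (S : Fin (L+1) → Fin n → ℕ) (d : Fin n → ℕ) : Prop :=
  ∀ i, ∑ l, S l i = d i

namespace QuiverData

variable (Q : QuiverData) (d : Fin Q.n → ℕ) (K : Type) [Field K]

/-- Evaluation of a formal noncommutative polynomial in the vertices (`Sum.inl`) and
arrows (`Sum.inr`) of `Q` on the representation `x`; an element of the path algebra `KQ`
is represented by such a polynomial. -/
noncomputable def evalRel (x : RepSpace Q d K) :
    FreeAlgebra K (Fin Q.n ⊕ Fin Q.numArrows) →ₐ[K] Module.End K (Carrier Q d K) :=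
  FreeAlgebra.lift K
    (Sum.elim (fun i => (proj Q d K i : Module.End K (Carrier Q d K)))
      (fun a => (arrowMap Q d K x a : Module.End K (Carrier Q d K))))

/-- The affine variety `Rep_d(Λ)` for `Λ = KQ/I`, where the ideal `I` is generated by the
set `R` of relations: the set of points of `RepSpace` annihilating every relation. -/
def RepVar (R : Set (FreeAlgebra K (Fin Q.n ⊕ Fin Q.numArrows))) :
    Set (RepSpace Q d K) :=
  {x | ∀ r ∈ R, evalRel Q d K x r = 0}

/-- The affine variety `Rep_d(Λ)` for the truncated path algebra
`Λ = KQ/⟨all paths of length L+1⟩`. -/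
def TruncRepVar (L : ℕ) : Set (RepSpace Q d K) :=
  {x | ∀ w : List (Fin Q.numArrows), w.length = L + 1 → wordMap Q d K x w = 0}

/-- A submodule of `M_x`, i.e. a subspace stable under the arrows and the vertex
idempotents. -/
def Stable (x : RepSpace Q d K) (N : Submodule K (Carrier Q d K)) : Prop :=
  (∀ a, N.map (arrowMap Q d K x a) ≤ N) ∧ ∀ i, N.map (proj Q d K i) ≤ N

/-- A submodule `N` of `M_x` is indecomposable (as a module). -/
def IndecompSub (x : RepSpace Q d K) (N : Submodule K (Carrier Q d K)) : Prop :=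
  N ≠ ⊥ ∧ ∀ N₁ N₂ : Submodule K (Carrier Q d K),
    Stable Q d K x N₁ → Stable Q d K x N₂ → N₁ ≤ N → N₂ ≤ N →
    N₁ ⊔ N₂ = N → N₁ ⊓ N₂ = ⊥ → N₁ = ⊥ ∨ N₂ = ⊥

/-- The module `M_x` is indecomposable. -/
def IndecompRep (x : RepSpace Q d K) : Prop :=
  IndecompSub Q d K x ⊤

/-- The module `M_x` is uniserial: its submodules form a chain. -/
def UniserialRep (x : RepSpace Q d K) : Prop :=
  ∀ N₁ N₂ : Submodule K (Carrier Q d K),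
    Stable Q d K x N₁ → Stable Q d K x N₂ → N₁ ≤ N₂ ∨ N₂ ≤ N₁

/-- `M_x` decomposes as a direct sum of `s` indecomposable submodules whose dimension
vectors are `D 0, …, D (s-1)`. -/
def DecompWith (x : RepSpace Q d K) (s : ℕ) (D : Fin s → Fin Q.n → ℕ) : Prop :=
  ∃ N : Fin s → Submodule K (Carrier Q d K),
    (∀ r, Stable Q d K x (N r)) ∧
    (∀ r, Disjoint (N r) (⨆ t, ⨆ (_ : t ≠ r), N t)) ∧
    (⨆ r, N r) = ⊤ ∧
    (∀ r, IndecompSub Q d K x (N r)) ∧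
    ∀ r i, vdim Q d K (N r) i = D r i

/-- A homomorphism of representations `M_x → M_y` (for possibly different dimension
vectors): a linear map commuting with the arrow actions and the vertex projections. -/
def RepHom (dx dy : Fin Q.n → ℕ) (x : RepSpace Q dx K) (y : RepSpace Q dy K)
    (φ : Carrier Q dx K →ₗ[K] Carrier Q dy K) : Prop :=
  (∀ a, φ ∘ₗ arrowMap Q dx K x a = arrowMap Q dy K y a ∘ₗ φ) ∧
  ∀ i, φ ∘ₗ proj Q dx K i = proj Q dy K i ∘ₗ φ

/-- The submodule `N` of `M_x` is isomorphic, as a representation, to `M_y`. -/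
def SubrepIso (dy : Fin Q.n → ℕ) (x : RepSpace Q d K)
    (N : Submodule K (Carrier Q d K)) (y : RepSpace Q dy K) : Prop :=
  ∃ φ : Carrier Q d K →ₗ[K] Carrier Q dy K,
    N ⊓ LinearMap.ker φ = ⊥ ∧ N.map φ = ⊤ ∧
    (∀ a, ∀ m ∈ N, φ (arrowMap Q d K x a m) = arrowMap Q dy K y a (φ m)) ∧
    (∀ i, ∀ m ∈ N, φ (proj Q d K i m) = proj Q dy K i (φ m))

/-- The representations `M_x` and `M_y` are isomorphic; the isomorphism classes are
exactly the orbits of the `GL(d)`-action. -/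
def IsoRep (x y : RepSpace Q d K) : Prop :=
  ∃ φ : Carrier Q d K ≃ₗ[K] Carrier Q d K,
    (∀ a m, φ (arrowMap Q d K x a m) = arrowMap Q d K y a (φ m)) ∧
    ∀ i m, φ (proj Q d K i m) = proj Q d K i (φ m)

/-- The `GL(d)`-orbit of the point `x`, i.e. the set of points encoding modules
isomorphic to `M_x`. -/
def orbitSet (x : RepSpace Q d K) : Set (RepSpace Q d K) :=
  {y | IsoRep Q d K x y}

/-- Given a family `P` of varieties `Rep_dv(Λ)` (one for every dimension vector `dv`),
`Ext¹_Λ(M_x, M_y) = 0`: every extension `0 → M_y → E → M_x → 0` of `Λ`-modules splits. -/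
def Ext1Zero (P : ∀ dv : Fin Q.n → ℕ, Set (RepSpace Q dv K))
    (dx dy : Fin Q.n → ℕ) (x : RepSpace Q dx K) (y : RepSpace Q dy K) : Prop :=
  ∀ z ∈ P (fun i => dx i + dy i),
    ∀ (ι : Carrier Q dy K →ₗ[K] Carrier Q (fun i => dx i + dy i) K)
      (π : Carrier Q (fun i => dx i + dy i) K →ₗ[K] Carrier Q dx K),
      RepHom Q K dy (fun i => dx i + dy i) y z ι →
      RepHom Q K (fun i => dx i + dy i) dx z x π →
      Function.Injective ι → Function.Surjective π →
      LinearMap.ker π = LinearMap.range ι →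
      ∃ σ : Carrier Q dx K →ₗ[K] Carrier Q (fun i => dx i + dy i) K,
        RepHom Q K dx (fun i => dx i + dy i) x z σ ∧ π ∘ₗ σ = LinearMap.id

/-- The direct sum `C₁ ⊕ ⋯ ⊕ C_s` of subvarieties `C_r ⊆ Rep_{D r}(Λ)`: the set of
points `x ∈ Rep_d(Λ)` whose module decomposes as `M_x ≅ ⊕_r M^{(r)}` with `M^{(r)}`
encoded by a point of `C_r`. -/
def DirectSumSet (s : ℕ) (D : Fin s → Fin Q.n → ℕ)
    (Cs : ∀ r : Fin s, Set (RepSpace Q (D r) K)) : Set (RepSpace Q d K) :=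
  {x | ∃ N : Fin s → Submodule K (Carrier Q d K),
    (∀ r, Stable Q d K x (N r)) ∧
    (∀ r, Disjoint (N r) (⨆ t, ⨆ (_ : t ≠ r), N t)) ∧
    (⨆ r, N r) = ⊤ ∧
    ∀ r, ∃ y ∈ Cs r, SubrepIso Q d K (D r) x (N r) y}

/-- The endomorphism space `End_Λ(M_x)` of the module `M_x`. -/
def endSpace (x : RepSpace Q d K) :
    Submodule K (Carrier Q d K →ₗ[K] Carrier Q d K) where
  carrier := {φ | RepHom Q K d d x x φ}
  add_mem' := by
    intro φ ψ hφ hψ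
    exact ⟨fun a => by rw [LinearMap.add_comp, LinearMap.comp_add, hφ.1 a, hψ.1 a],
      fun i => by rw [LinearMap.add_comp, LinearMap.comp_add, hφ.2 i, hψ.2 i]⟩
  zero_mem' := by
    exact ⟨fun a => by simp, fun i => by simp⟩
  smul_mem' := by
    intro c φ hφ
    exact ⟨fun a => by rw [LinearMap.smul_comp, LinearMap.comp_smul, hφ.1 a],
      fun i => by rw [LinearMap.smul_comp, LinearMap.comp_smul, hφ.2 i]⟩

/-- A word of arrows is a (composable) path when read in function-composition order. -/
def IsPathWord (w : List (Fin Q.numArrows)) : Prop :=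
  List.Chain' (fun a b => Q.src a = Q.tgt b) w

/-- The quiver `Q` has no oriented cycles. -/
def Acyclic : Prop :=
  ∀ (a : Fin Q.numArrows) (w : List (Fin Q.numArrows)),
    IsPathWord Q (a :: w) →
      Q.tgt a ≠ Q.src ((a :: w).getLast (List.cons_ne_nil a w))

/-- A filtration `M_x = F 0 ⊇ F 1 ⊇ ⋯ ⊇ F (L+1) = 0` by submodules which is governed by
the semisimple sequence `S`: each layer `F l / F (l+1)` is semisimple, isomorphic to `S l`. -/
def Governed (L : ℕ) (x : RepSpace Q d K) (S : Fin (L+1) → Fin Q.n → ℕ)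
    (F : Fin (L+2) → Submodule K (Carrier Q d K)) : Prop :=
  F 0 = ⊤ ∧ F (Fin.last (L+1)) = ⊥ ∧
  (∀ l : Fin (L+1), F l.succ ≤ F l.castSucc) ∧
  (∀ (l : Fin (L+2)) (i : Fin Q.n), (F l).map (proj Q d K i) ≤ F l) ∧
  (∀ (l : Fin (L+1)) (a : Fin Q.numArrows),
      (F l.castSucc).map (arrowMap Q d K x a) ≤ F l.succ) ∧
  ∀ (l : Fin (L+1)) (i : Fin Q.n),
      vdim Q d K (F l.castSucc) i = S l i + vdim Q d K (F l.succ) i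

/-- `Filt S`: the set of points whose module has a filtration governed by `S`. -/
def FiltSet (L : ℕ) (S : Fin (L+1) → Fin Q.n → ℕ) : Set (RepSpace Q d K) :=
  {x | ∃ F, Governed Q d K L x S F}

/-- `Γ(M_x)`: the number of semisimple sequences which are realizable (i.e. occur as the
radical layering of a module in the variety `P`) and which govern some filtration of `M_x`. -/
noncomputable def gammaCount (L : ℕ) (P : Set (RepSpace Q d K))
    (x : RepSpace Q d K) : ℕ :=
  Set.ncard {S : Fin (L+1) → Fin Q.n → ℕ |
    (∃ y ∈ P, radLayering Q d K L y = S) ∧ ∃ F, Governed Q d K L x S F}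

/-- `Sstar` is the generic (= minimal, attained) socle layering of the modules in `W`. -/
def GenSoc (L : ℕ) (W : Set (RepSpace Q d K))
    (Sstar : Fin (L+1) → Fin Q.n → ℕ) : Prop :=
  (∀ x ∈ W, dominates Sstar (socLayering Q d K L x)) ∧
  ∃ x ∈ W, socLayering Q d K L x = Sstar

end QuiverData

namespace QuiverData

variable (Q : QuiverData)

/-- The `i`-th entry of the row vector `e·A` (over `ℤ`), where `A` is the adjacency
matrix of `Q`: the sum of `e (src a)` over all arrows `a` ending at `i`. -/
def inflowZ (e : Fin Q.n → ℤ) (i : Fin Q.n) : ℤ :=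
  ∑ a ∈ Finset.univ.filter (fun a => Q.tgt a = i), e (Q.src a)

/-- The `i`-th entry of the row vector `e·B` (over `ℤ`), where `B` is the transpose of
the adjacency matrix of `Q`. -/
def outflowZ (e : Fin Q.n → ℤ) (i : Fin Q.n) : ℤ :=
  ∑ a ∈ Finset.univ.filter (fun a => Q.src a = i), e (Q.tgt a)

/-- Partial sums `t⁽⁰⁾ + ⋯ + t⁽ˡ⁾` of the recursion
`t⁽⁰⁾ = sup{0, d − d·A}`, `t⁽ˡ⁺¹⁾ = sup{0, (d − ∑_{k≤l} t⁽ᵏ⁾) − (d − ∑_{k≤l} t⁽ᵏ⁾)·A}`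
(computed componentwise). -/
def cumLayer (dz : Fin Q.n → ℤ) : ℕ → Fin Q.n → ℤ
  | 0 => fun i => max 0 (dz i - inflowZ Q dz i)
  | (l+1) => fun i =>
      cumLayer dz l i +
        max 0 ((dz i - cumLayer dz l i) -
          inflowZ Q (fun j => dz j - cumLayer dz l j) i)

/-- The positive part `∑ᵢ eᵢ fᵢ` of the Euler form of `Q`. -/
def eulerHomPart (e f : Fin Q.n → ℕ) : ℕ := ∑ i, e i * f i

/-- The negative part `∑_{α} e_{src α} f_{tgt α}` of the Euler form of `Q`, so that
`⟨e, f⟩ = eulerHomPart e f − eulerExtPart e f`. -/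
def eulerExtPart (e f : Fin Q.n → ℕ) : ℕ :=
  ∑ a, e (Q.src a) * f (Q.tgt a)

end QuiverData

/-- The quiver with a single vertex and `r` loops. -/
def QuiverData.loopQuiver (r : ℕ) : QuiverData :=
  ⟨1, r, fun _ => 0, fun _ => 0⟩

namespace QuiverData

variable (Q : QuiverData) (d : Fin Q.n → ℕ) (K : Type) [Field K]

/-- The variety `Rep_d(Λ)` for `Λ = KQ/⟨Rels⟩`, regarded as a topological space with the
(subspace) Zariski topology. -/
abbrev GenV (Rels : Set (FreeAlgebra K (Fin Q.n ⊕ Fin Q.numArrows))) :=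
  {y : RepSpace Q d K // y ∈ RepVar Q d K Rels}

/-- The variety `Rep_d(Λ)` for the truncated path algebra
`Λ = KQ/⟨paths of length L+1⟩`, regarded as a topological space. -/
abbrev TruncV (L : ℕ) := {y : RepSpace Q d K // y ∈ TruncRepVar Q d K L}

end QuiverData

/-!
For a semisimple sequence `S`, let `Filt S` be the set of points admitting a filtration governed by
`S`. Choosing adapted bases exhibits `Filt S` as the polynomial image of a principal open subset of
an affine space (an invertible frame at every vertex, a degree raising matrix at every arrow), so
`Filt S` is irreducible. It is closed by the valuative criterion: a filtration over the fraction
field of a valuation ring reduces to one over the residue field with the same dimensions.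

The terms of a governed filtration contain the powers of the radical, hence a point of `Filt S` has
radical layering at least `S` in the dominance order, and `S(M)` governs the radical filtration
alone. Thus the finitely many `Filt S` with `S` realizable are closed irreducible sets covering the
variety, and `Γ` counts those that contain a given point, which makes it upper semicontinuous.
Moreover `Rep S` is dense in `Filt S`, and `Filt S` is a component exactly when the others do not
cover it, that is, when some point of it has `Γ = 1`; such a point lies in `Rep S`.
-/

open IsLocalRing in
theorem exists_lift_valuationSubring {A F E : Type*} [CommRing A] [Ring F] [Nontrivial F] [Field E]
    (φ : A →+* E) (ε : A →+* F) (h : RingHom.ker φ ≤ RingHom.ker ε) :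
    ∃ (V : ValuationSubring E) (φV : A →+* V), (∀ a, (φV a : E) = φ a) ∧
      ∀ a b, ε a = ε b → residue V (φV a) = residue V (φV b) := by
  set I : Ideal φ.range := (RingHom.ker ε).map φ.rangeRestrict
  have mem_I {r : φ.range} : r ∈ I ↔ ∃ a, ε a = 0 ∧ φ.rangeRestrict a = r :=
    Ideal.mem_map_iff_of_surjective _ φ.rangeRestrict_surjective
  have hI : I ≠ ⊤ := by
    rw [Ideal.ne_top_iff_one, mem_I]
    rintro ⟨a, ha, ha1⟩
    have : ε (a - 1) = 0 := h (by
      simpa [RingHom.mem_ker, sub_eq_zero] using congrArg Subtype.val ha1)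
    simp [ha] at this
  obtain ⟨V, hV, hIV⟩ := Ideal.image_subset_nonunits_valuationSubring I hI
  refine ⟨V, φ.codRestrict V.toSubring fun a => hV ⟨a, rfl⟩, fun a => rfl, fun a b hab => ?_⟩
  rw [← sub_eq_zero, ← map_sub, ← map_sub, residue_eq_zero_iff,
    ← ValuationSubring.coe_mem_nonunits_iff]
  exact hIV ⟨φ.rangeRestrict (a - b), mem_I.mpr ⟨a - b, by simp [hab], rfl⟩, rfl⟩

section ZariskiTopology

open MvPolynomial IsLocalRing

variable {ι σ τ K : Type} [Field K]

local instance : TopologicalSpace (ι → K) := zariskiTopology ι K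

theorem isOpen_setOf_eval_ne_zero (p : MvPolynomial ι K) : IsOpen {x : ι → K | eval x p ≠ 0} :=
  TopologicalSpace.isOpen_generateFrom_of_mem ⟨p, rfl⟩

theorem exists_eval_ne_zero_subset {U : Set (ι → K)} (hU : IsOpen U) {x : ι → K} (hx : x ∈ U) :
    ∃ p : MvPolynomial ι K, eval x p ≠ 0 ∧ {z | eval z p ≠ 0} ⊆ U := by
  have hbasis := TopologicalSpace.isTopologicalBasis_of_subbasis_of_inter
    (t := zariskiTopology ι K) rfl (by
      rintro _ ⟨p, rfl⟩ _ ⟨q, rfl⟩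
      exact ⟨p * q, by ext z; simp⟩)
  obtain ⟨_, rfl | ⟨p, rfl⟩, hxp, hpU⟩ := hbasis.exists_subset_of_mem_open hx hU
  · exact ⟨1, by simp, (Set.subset_univ _).trans hpU⟩
  · exact ⟨p, hxp, hpU⟩

theorem eval_bind₁ (f : τ → MvPolynomial σ K) (p : MvPolynomial τ K) (y : σ → K) :
    eval y (bind₁ f p) = eval (fun t => eval y (f t)) p :=
  eval₂Hom_bind₁ (RingHom.id K) y f p

theorem continuous_eval_family (f : τ → MvPolynomial σ K) :
    Continuous fun (y : σ → K) t => eval y (f t) := by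
  refine continuous_generateFrom_iff.mpr ?_
  rintro _ ⟨p, rfl⟩
  simpa only [eval_bind₁, Set.preimage_ofPred_eq] using isOpen_setOf_eval_ne_zero (bind₁ f p)

theorem eval_eq_zero_of_mem_closure {s : Set (ι → K)} {p : MvPolynomial ι K}
    (hp : ∀ x ∈ s, eval x p = 0) {x : ι → K} (hx : x ∈ closure s) : eval x p = 0 := by
  by_contra hpx
  obtain ⟨z, hz, hzs⟩ := mem_closure_iff.mp hx _ (isOpen_setOf_eval_ne_zero p) hpx
  exact hz (hp z hzs)

theorem isIrreducible_setOf_eval_ne_zero [Infinite K] {q : MvPolynomial ι K} (hq : q ≠ 0) :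
    IsIrreducible {x : ι → K | eval x q ≠ 0} := by
  have exists_eval_ne_zero {p : MvPolynomial ι K} (hp : p ≠ 0) : ∃ x, eval x p ≠ 0 := by
    by_contra! h
    exact hp (funext fun x => by simp [h x])
  have ne_zero_of_eval {p : MvPolynomial ι K} {x : ι → K} (h : eval x p ≠ 0) : p ≠ 0 := by
    rintro rfl
    simp at h
  refine ⟨exists_eval_ne_zero hq, ?_⟩
  rintro U W hU hW ⟨x, -, hxU⟩ ⟨z, -, hzW⟩
  obtain ⟨p, hp, hpU⟩ := exists_eval_ne_zero_subset hU hxU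
  obtain ⟨r, hr, hrW⟩ := exists_eval_ne_zero_subset hW hzW
  obtain ⟨w, hw⟩ := exists_eval_ne_zero
    (mul_ne_zero hq (mul_ne_zero (ne_zero_of_eval hp) (ne_zero_of_eval hr)))
  simp only [map_mul, mul_ne_zero_iff] at hw
  exact ⟨w, hw.1, hpU hw.2.1, hrW hw.2.2⟩

theorem exists_eval_ne_zero_of_eval₂_ne_zero [IsAlgClosed K] [Finite σ] {F : Type*}
    [CommRing F] [IsDomain F] (j : K →+* F) (y : σ → F) {q : MvPolynomial σ K}
    (hq : q.eval₂ j y ≠ 0) :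
    ∃ z : σ → K, (∀ p : MvPolynomial σ K, p.eval₂ j y = 0 → eval z p = 0) ∧ eval z q ≠ 0 := by
  set I := RingHom.ker (eval₂Hom j y)
  by_contra! h
  have hqI : q ∈ vanishingIdeal K (zeroLocus K I) := by
    intro z hz
    exact h z hz
  have hI : I.IsPrime := RingHom.ker_isPrime _
  rw [vanishingIdeal_zeroLocus_eq_radical, hI.isRadical.radical] at hqI
  exact hq hqI

theorem isClosed_image_of_valuative [IsAlgClosed K] [Finite σ]
    (f : τ → MvPolynomial σ K) (q : MvPolynomial σ K)
    (h : ∀ (E : Type) [Field E] (V : ValuationSubring E) (j : K →+* V) (y : σ → E) (v : τ → V),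
      q.eval₂ (V.subtype.comp j) y ≠ 0 → (∀ t, (f t).eval₂ (V.subtype.comp j) y = v t) →
      ∃ y' : σ → ResidueField V,
        q.eval₂ ((residue V).comp j) y' ≠ 0 ∧
        ∀ t, (f t).eval₂ ((residue V).comp j) y' = residue V (v t)) :
    IsClosed ((fun (y : σ → K) t => eval y (f t)) '' {y | eval y q ≠ 0}) := by
  -- A point of the closure is the residue, in a valuation ring of the function field of the source,
  -- of the image of the generic point; the Nullstellensatz descends a preimage over the residue
  -- field to `K`.
  refine isClosed_of_closure_subset fun x hx => ?_
  let E := FractionRing (MvPolynomial σ K)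
  let φ : MvPolynomial τ K →+* E :=
    (algebraMap (MvPolynomial σ K) E).comp (bind₁ f : _ →+* MvPolynomial σ K)
  have hq : q ≠ 0 := by
    rintro rfl
    simp at hx
  have hker : RingHom.ker φ ≤ RingHom.ker (eval x) := by
    intro p hp
    have hp : bind₁ f p = 0 := by simpa [φ] using hp
    refine eval_eq_zero_of_mem_closure ?_ hx
    rintro _ ⟨y, -, rfl⟩
    rw [← eval_bind₁, hp, map_zero]
  obtain ⟨V, φV, hφV, hres⟩ := exists_lift_valuationSubring φ (eval x) hker
  let j : K →+* V := φV.comp C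
  let v : τ → V := fun t => φV (X t)
  let y : σ → E := fun s => algebraMap (MvPolynomial σ K) E (X s)
  have hj : V.subtype.comp j = (algebraMap (MvPolynomial σ K) E).comp C := by
    ext a
    simp [j, hφV, φ]
  have eval₂_y (p : MvPolynomial σ K) : p.eval₂ (V.subtype.comp j) y = algebraMap _ E p := by
    rw [hj]
    exact (eval₂_comp_left _ _ _ _).symm.trans (by simp)
  have hqy : q.eval₂ (V.subtype.comp j) y ≠ 0 := by
    rwa [eval₂_y, Ne, FaithfulSMul.algebraMap_eq_zero_iff]
  obtain ⟨y', hqy', hy'⟩ := h E V j y v hqy fun t => by simp [eval₂_y, v, hφV, φ]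
  obtain ⟨z, hz, hqz⟩ := exists_eval_ne_zero_of_eval₂_ne_zero _ y' hqy'
  refine ⟨z, hqz, funext fun t => sub_eq_zero.mp ?_⟩
  have residue_v : residue V (v t) = residue V (j (x t)) :=
    hres (X t) (C (x t)) (by simp)
  have := hz (f t - C (x t)) (by simp [hy', residue_v])
  rwa [map_sub, eval_C] at this

end ZariskiTopology

section ReductionModuloValuation

open IsLocalRing

variable {E : Type*} [Field E] {V : ValuationSubring E} {ι κ : Type*}

theorem exists_smul_primitive [Finite κ] {c : κ → E} (hc : c ≠ 0) :
    ∃ (t : E) (r : κ → V), (∀ i, (r i : E) = t * c i) ∧ ∃ i, r i = 1 := by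
  obtain ⟨i₁, hi₁⟩ := Function.ne_iff.mp hc
  have : Nonempty κ := ⟨i₁⟩
  obtain ⟨i₀, hi₀⟩ := Finite.exists_max fun i => V.valuation (c i)
  have hc₀ : c i₀ ≠ 0 := by
    intro h
    have := hi₀ i₁
    simp_all
  refine ⟨(c i₀)⁻¹, fun i => ⟨(c i₀)⁻¹ * c i, ?_⟩, fun i => rfl, i₀,
    Subtype.ext (inv_mul_cancel₀ hc₀)⟩
  rw [← V.valuation_le_one_iff, map_mul, map_inv₀]
  exact inv_mul_le_one_of_le₀ (hi₀ i) zero_le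

/-- The reduction of a subspace `W ⊆ E^ι` modulo a valuation ring `V` of `E`: the residue vectors
of the `V`-integral vectors of `W`. -/
def reduceSubmodule (V : ValuationSubring E) (W : Submodule E (ι → E)) :
    Submodule (ResidueField V) (ι → ResidueField V) where
  carrier := {w | ∃ v : ι → V, V.subtype ∘ v ∈ W ∧ residue V ∘ v = w}
  zero_mem' := ⟨0, W.zero_mem, by ext; simp⟩
  add_mem' := by
    rintro _ _ ⟨v, hv, rfl⟩ ⟨v', hv', rfl⟩
    exact ⟨v + v', W.add_mem hv hv', by ext; simp⟩
  smul_mem' := by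
    rintro a _ ⟨v, hv, rfl⟩
    obtain ⟨c, rfl⟩ := residue_surjective a
    exact ⟨c • v, W.smul_mem (c : E) hv, by ext; simp⟩

theorem mem_reduceSubmodule {W : Submodule E (ι → E)} {v : ι → V}
    (hv : V.subtype ∘ v ∈ W) : residue V ∘ v ∈ reduceSubmodule V W :=
  ⟨v, hv, rfl⟩

theorem reduceSubmodule_mono {W W' : Submodule E (ι → E)} (h : W ≤ W') :
    reduceSubmodule V W ≤ reduceSubmodule V W' := by
  rintro _ ⟨v, hv, rfl⟩
  exact mem_reduceSubmodule (h hv)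

theorem reduceSubmodule_top : reduceSubmodule V (⊤ : Submodule E (ι → E)) = ⊤ := by
  refine eq_top_iff.mpr fun w _ => ?_
  choose v hv using fun i => residue_surjective (w i)
  exact ⟨v, trivial, funext hv⟩

theorem reduceSubmodule_bot : reduceSubmodule V (⊥ : Submodule E (ι → E)) = ⊥ := by
  refine eq_bot_iff.mpr ?_
  rintro _ ⟨v, hv, rfl⟩
  have : v = 0 := funext fun i => Subtype.ext (congrFun hv i)
  simp [this]

theorem mulVec_mem_reduceSubmodule {ι' : Type*} [Fintype ι] {A : Matrix ι' ι V}
    {W : Submodule E (ι → E)} {W' : Submodule E (ι' → E)}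
    (h : ∀ w ∈ W, (A.map V.subtype).mulVec w ∈ W') {w : ι → ResidueField V}
    (hw : w ∈ reduceSubmodule V W) :
    (A.map (residue V)).mulVec w ∈ reduceSubmodule V W' := by
  obtain ⟨v, hv, rfl⟩ := hw
  have mulVec_comp {R : Type _} [CommRing R] (f : V →+* R) :
      (A.map f).mulVec (f ∘ v) = f ∘ A.mulVec v :=
    funext fun i => (RingHom.map_mulVec f A v i).symm
  exact ⟨A.mulVec v, mulVec_comp V.subtype ▸ h _ hv, (mulVec_comp (residue V)).symm⟩

theorem exists_smul_sum_eq_residue_ne_zero [Fintype κ] {u : κ → ι → V}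
    (hu : LinearIndependent (ResidueField V) fun j => residue V ∘ u j)
    {c : κ → E} (hc : c ≠ 0) :
    ∃ (t : E) (v : ι → V), V.subtype ∘ v = t • ∑ j, c j • (V.subtype ∘ u j) ∧
      residue V ∘ v ∈ Submodule.span (ResidueField V) (Set.range fun j => residue V ∘ u j) ∧
      residue V ∘ v ≠ 0 := by
  obtain ⟨t, r, hr, j₀, hj₀⟩ := exists_smul_primitive (V := V) hc
  have residue_sum : (residue V ∘ fun i => ∑ j, r j * u j i) =
      ∑ j, residue V (r j) • (residue V ∘ u j) := by
    ext i
    simp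
  refine ⟨t, fun i => ∑ j, r j * u j i, ?_, ?_, fun h => ?_⟩
  · ext i
    simp [hr, Finset.mul_sum, mul_assoc]
  · rw [residue_sum]
    exact Submodule.sum_mem _ fun j _ => Submodule.smul_mem _ _ (Submodule.subset_span ⟨j, rfl⟩)
  · rw [residue_sum] at h
    simpa [hj₀] using Fintype.linearIndependent_iff.mp hu _ h j₀

theorem linearIndependent_of_residue [Finite κ] {u : κ → ι → V}
    (hu : LinearIndependent (ResidueField V) fun j => residue V ∘ u j) :
    LinearIndependent E fun j => V.subtype ∘ u j := by
  have := Fintype.ofFinite κ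
  refine Fintype.linearIndependent_iff.mpr fun c hc => ?_
  by_contra! hne
  obtain ⟨t, v, hv, -, hv₀⟩ := exists_smul_sum_eq_residue_ne_zero hu (Function.ne_iff.mpr hne)
  rw [hc, smul_zero] at hv
  have : v = 0 := funext fun i => Subtype.ext (congrFun hv i)
  exact hv₀ (by ext; simp [this])

theorem disjoint_span_of_disjoint_reduceSubmodule [Finite κ] {u : κ → ι → V}
    (hu : LinearIndependent (ResidueField V) fun j => residue V ∘ u j) {W : Submodule E (ι → E)}
    (hW : Disjoint (Submodule.span (ResidueField V) (Set.range fun j => residue V ∘ u j))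
      (reduceSubmodule V W)) :
    Disjoint (Submodule.span E (Set.range fun j => V.subtype ∘ u j)) W := by
  have := Fintype.ofFinite κ
  refine Submodule.disjoint_def.mpr fun w hwu hwW => ?_
  obtain ⟨c, rfl⟩ := (Submodule.mem_span_range_iff_exists_fun E).mp hwu
  by_contra hne
  have hc : c ≠ 0 := by
    rintro rfl
    simp at hne
  obtain ⟨t, v, hv, hvspan, hv₀⟩ := exists_smul_sum_eq_residue_ne_zero hu hc
  have hvW : V.subtype ∘ v ∈ W := by
    rw [hv]
    exact W.smul_mem t hwW
  exact hv₀ (Submodule.disjoint_def.mp hW _ hvspan (mem_reduceSubmodule hvW))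

variable [Finite ι]

theorem finrank_reduceSubmodule_le (W : Submodule E (ι → E)) :
    Module.finrank (ResidueField V) (reduceSubmodule V W) ≤ Module.finrank E W := by
  let b := Module.finBasis (ResidueField V) (reduceSubmodule V W)
  choose u hu hub using fun j => (b j).2
  have hu' : LinearIndependent E fun j => V.subtype ∘ u j := by
    refine linearIndependent_of_residue ?_
    rw [funext hub]
    exact b.linearIndependent.map' (reduceSubmodule V W).subtype (Submodule.ker_subtype _)
  have : LinearIndependent E fun j => (⟨_, hu j⟩ : W) := LinearIndependent.of_comp W.subtype hu'
  simpa using this.fintype_card_le_finrank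

theorem finrank_le_finrank_reduceSubmodule (W : Submodule E (ι → E)) :
    Module.finrank E W ≤ Module.finrank (ResidueField V) (reduceSubmodule V W) := by
  -- A basis of a complement of the reduction lifts to a basis of a subspace disjoint from `W`.
  obtain ⟨U, hU⟩ := (reduceSubmodule V W).exists_isCompl
  let b := Module.finBasis (ResidueField V) U
  choose u hu using fun j i => residue_surjective (R := V) ((b j).1 i)
  have hres (j) : residue V ∘ u j = (b j).1 := funext (hu j)
  have hu' : LinearIndependent (ResidueField V) fun j => residue V ∘ u j := by
    rw [funext hres]
    exact b.linearIndependent.map' U.subtype (Submodule.ker_subtype _)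
  have hspanU : Submodule.span (ResidueField V) (Set.range fun j => residue V ∘ u j) ≤ U := by
    refine Submodule.span_le.mpr ?_
    rintro _ ⟨j, rfl⟩
    simp [hres j]
  have hdisj := disjoint_span_of_disjoint_reduceSubmodule hu' (hU.disjoint.symm.mono_left hspanU)
  have hspan := finrank_span_eq_card (linearIndependent_of_residue hu')
  have hle := Submodule.finrank_add_finrank_le_of_disjoint hdisj
  have hcompl := Submodule.finrank_add_eq_of_isCompl hU
  have := Fintype.ofFinite ι
  simp only [Module.finrank_fintype_fun_eq_card, Fintype.card_fin] at hspan hle hcompl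
  omega

theorem finrank_reduceSubmodule (W : Submodule E (ι → E)) :
    Module.finrank (ResidueField V) (reduceSubmodule V W) = Module.finrank E W :=
  (finrank_reduceSubmodule_le W).antisymm (finrank_le_finrank_reduceSubmodule W)

end ReductionModuloValuation

section FiniteCovers

variable {X ι : Type*} [TopologicalSpace X]

theorem isIrreducible_preimage_of_isInducing {Y : Type*} [TopologicalSpace Y] {f : Y → X}
    (hf : Topology.IsInducing f) {s : Set X} (hs : IsIrreducible s) (hsf : s ⊆ Set.range f) :
    IsIrreducible (f ⁻¹' s) := by
  refine ⟨hs.nonempty.preimage' hsf, fun u v hu hv => ?_⟩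
  obtain ⟨u', hu', rfl⟩ := hf.isOpen_iff.mp hu
  obtain ⟨v', hv', rfl⟩ := hf.isOpen_iff.mp hv
  rintro ⟨y, hys, hyu⟩ ⟨z, hzs, hzv⟩
  obtain ⟨w, hws, hw⟩ := hs.2 u' v' hu' hv' ⟨f y, hys, hyu⟩ ⟨f z, hzs, hzv⟩
  obtain ⟨w, rfl⟩ := hsf hws
  exact ⟨w, hws, hw⟩

theorem exists_subset_of_isIrreducible_of_subset_iUnion [Finite ι] {s : Set X}
    (hs : IsIrreducible s) {C : ι → Set X} (hC : ∀ i, IsClosed (C i)) (hsC : s ⊆ ⋃ i, C i) :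
    ∃ i, s ⊆ C i := by
  classical
  have := Fintype.ofFinite ι
  obtain ⟨_, hz, hsz⟩ := isIrreducible_iff_sUnion_isClosed.mp hs (Finset.univ.image C)
    (by simpa using hC) (by simpa using hsC)
  obtain ⟨i, -, rfl⟩ := Finset.mem_image.mp hz
  exact ⟨i, hsz⟩

theorem isClosed_setOf_le_ncard [Finite ι] {C : ι → Set X} (hC : ∀ i, IsClosed (C i)) (m : ℕ) :
    IsClosed {x | m ≤ {i | x ∈ C i}.ncard} := by
  have : {x | m ≤ {i | x ∈ C i}.ncard} =
      ⋃ t : {t : Set ι // t.ncard = m}, ⋂ i ∈ t.1, C i := by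
    ext x
    simp only [Set.mem_ofPred_eq, Set.mem_iUnion, Set.mem_iInter]
    refine ⟨fun hm => ?_, fun ⟨t, ht⟩ => t.2 ▸ Set.ncard_le_ncard ht (Set.toFinite _)⟩
    obtain ⟨t, hts, ht⟩ := Set.exists_subset_card_eq hm
    exact ⟨⟨t, ht⟩, hts⟩
  rw [this]
  exact isClosed_iUnion_of_finite fun t => isClosed_biInter fun i _ => hC i

variable [Finite ι] {C : ι → Set X} {σ : X → ι} (hclosed : ∀ i, IsClosed (C i))
  (hirr : ∀ i, IsIrreducible (C i)) (hmem : ∀ x, x ∈ C (σ x))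
  (hanti : ∀ x y, x ∈ C (σ y) → y ∈ C (σ x) → σ x = σ y)
include hclosed hirr hmem hanti

theorem closure_fiber_eq (y : X) : closure {x | σ x = σ y} = C (σ y) := by
  refine (closure_minimal (fun x (hx : σ x = σ y) => hx ▸ hmem x) (hclosed _)).antisymm ?_
  let T := {i // ∃ z ∈ C (σ y), σ z = i ∧ i ≠ σ y}
  have cover : C (σ y) ⊆ ⋃ t : Option T, t.elim (closure {x | σ x = σ y}) fun i => C i := by
    intro z hz
    by_cases h : σ z = σ y
    · exact Set.mem_iUnion.mpr ⟨none, subset_closure h⟩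
    · exact Set.mem_iUnion.mpr ⟨some ⟨σ z, z, hz, rfl, h⟩, hmem z⟩
  obtain ⟨_ | ⟨_, z, hz, rfl, hne⟩, hsub⟩ :=
    exists_subset_of_isIrreducible_of_subset_iUnion (hirr _)
      (by rintro (_ | i); exacts [isClosed_closure, hclosed i]) cover
  · exact hsub
  · exact absurd (hanti z y hz (hsub (hmem y))) hne

theorem closure_fiber_mem_irreducibleComponents_iff (hσ : Function.Surjective σ) (i : ι) :
    closure {x | σ x = i} ∈ irreducibleComponents X ↔ ∃ x, σ x = i ∧ ∀ j, x ∈ C j → j = i := by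
  obtain ⟨y, rfl⟩ := hσ i
  rw [closure_fiber_eq hclosed hirr hmem hanti]
  constructor
  · intro hmax
    by_contra! h
    have cover : C (σ y) ⊆ ⋃ j : {j // j ≠ σ y}, C j := by
      intro x _
      by_cases hxy : σ x = σ y
      · obtain ⟨j, hxj, hj⟩ := h x hxy
        exact Set.mem_iUnion.mpr ⟨⟨j, hj⟩, hxj⟩
      · exact Set.mem_iUnion.mpr ⟨⟨σ x, hxy⟩, hmem x⟩
    obtain ⟨⟨j, hj⟩, hsub⟩ := exists_subset_of_isIrreducible_of_subset_iUnion (hirr _)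
      (C := fun j : {j // j ≠ σ y} => C j) (fun j => hclosed j) cover
    obtain ⟨z, rfl⟩ := hσ j
    exact hj (hanti z y (hmax.2 (hirr _) hsub (hmem z)) (hsub (hmem y)))
  · rintro ⟨x, hxy, hx⟩
    refine ⟨hirr _, fun Z hZ hle => ?_⟩
    obtain ⟨j, hj⟩ := exists_subset_of_isIrreducible_of_subset_iUnion hZ hclosed
      fun z _ => Set.mem_iUnion.mpr ⟨σ z, hmem z⟩
    have : x ∈ Z := hle (hxy ▸ hmem x)
    exact hx j (hj this) ▸ hj

end FiniteCovers

theorem sum_Iic_add_eq_of_telescoping {n : ℕ} {f : Fin (n + 2) → ℕ} {s : Fin (n + 1) → ℕ}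
    (h : ∀ l : Fin (n + 1), f l.castSucc = s l + f l.succ) (l : Fin (n + 1)) :
    ∑ j ∈ Finset.Iic l, s j + f l.succ = f 0 := by
  induction l using Fin.induction with
  | zero =>
    have : Finset.Iic (0 : Fin (n + 1)) = {0} := by ext; simp
    simpa [this] using (h 0).symm
  | succ l ih =>
    have : Finset.Iic l.succ = insert l.succ (Finset.Iic l.castSucc) := by
      ext j
      simp only [Finset.mem_Iic, Finset.mem_insert, Fin.le_def, Fin.ext_iff, Fin.val_succ,
        Fin.val_castSucc]
      omega
    rw [this, Finset.sum_insert (by simp), ← ih, Fin.succ_castSucc, h l.succ]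
    ring

theorem sum_eq_of_telescoping {n : ℕ} {f : Fin (n + 2) → ℕ} {s : Fin (n + 1) → ℕ}
    (h : ∀ l : Fin (n + 1), f l.castSucc = s l + f l.succ) (hlast : f (Fin.last (n + 1)) = 0) :
    ∑ j, s j = f 0 := by
  have := sum_Iic_add_eq_of_telescoping h (Fin.last n)
  rwa [Fin.succ_last, hlast, ← Fin.top_eq_last, Finset.Iic_top] at this

theorem exists_fun_card_fiber_eq {ι κ : Type*} [Fintype ι] [Fintype κ] [DecidableEq κ]
    {s : κ → ℕ} (hs : ∑ k, s k = Fintype.card ι) :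
    ∃ deg : ι → κ, ∀ k, #{p | deg p = k} = s k := by
  have e : ι ≃ Σ k, Fin (s k) := Fintype.equivOfCardEq (by simp [hs])
  refine ⟨fun p => (e p).1, fun k => ?_⟩
  rw [← Fintype.card_subtype, ← Fintype.card_fin (s k)]
  exact Fintype.card_congr
    ((e.subtypeEquiv fun _ => Iff.rfl).trans (Equiv.sigmaSubtype (β := fun k => Fin (s k)) k))

theorem exists_basis_toMatrix_eq {ι K : Type*} [Fintype ι] [DecidableEq ι] [Field K]
    {B : Matrix ι ι K} (hB : IsUnit B.det) :
    ∃ b : Module.Basis ι K (ι → K), (Pi.basisFun K ι).toMatrix b = B := by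
  refine ⟨(Pi.basisFun K ι).map (Matrix.toLinearEquiv (Pi.basisFun K ι) B hB), ?_⟩
  ext p q
  simp [Module.Basis.toMatrix_apply, Matrix.toLin_eq_toLin']

section AdaptedBases

variable {K M ι : Type*} [Field K] [AddCommGroup M] [Module K M] {n : ℕ}

/-- The descending flag of subspaces attached to a basis `b` and a degree function on its index
set: the `l`-th member is spanned by the basis vectors of degree at least `l`. -/
def basisFlag (b : Module.Basis ι K M) (deg : ι → Fin (n + 1)) (l : Fin (n + 2)) :
    Submodule K M :=
  Submodule.span K (b '' {p | l ≤ (deg p).castSucc})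

theorem mem_basisFlag {b : Module.Basis ι K M} {deg : ι → Fin (n + 1)} {l : Fin (n + 2)} {m : M} :
    m ∈ basisFlag b deg l ↔ ∀ p, b.repr m p ≠ 0 → l ≤ (deg p).castSucc := by
  rw [basisFlag, Module.Basis.mem_span_image]
  simp [Set.subset_def]

theorem basisFlag_zero (b : Module.Basis ι K M) (deg : ι → Fin (n + 1)) :
    basisFlag b deg 0 = ⊤ := by
  simp [basisFlag, b.span_eq]

theorem basisFlag_last (b : Module.Basis ι K M) (deg : ι → Fin (n + 1)) :
    basisFlag b deg (Fin.last (n + 1)) = ⊥ := by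
  simp [basisFlag, Fin.last_le_iff, (Fin.castSucc_lt_last _).ne]

theorem basisFlag_antitone (b : Module.Basis ι K M) (deg : ι → Fin (n + 1)) :
    Antitone (basisFlag b deg) :=
  fun _ _ h => Submodule.span_mono (Set.image_mono fun _ => h.trans)

theorem finrank_basisFlag [Fintype ι] (b : Module.Basis ι K M) (deg : ι → Fin (n + 1))
    (l : Fin (n + 2)) :
    Module.finrank K (basisFlag b deg l) = #{p | l ≤ (deg p).castSucc} := by
  rw [basisFlag, Set.image_eq_range, ← Fintype.card_subtype]
  exact finrank_span_eq_card (b.linearIndependent.comp _ Subtype.val_injective)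

theorem finrank_basisFlag_castSucc [Fintype ι] (b : Module.Basis ι K M) (deg : ι → Fin (n + 1))
    (l : Fin (n + 1)) :
    Module.finrank K (basisFlag b deg l.castSucc) =
      #{p | deg p = l} + Module.finrank K (basisFlag b deg l.succ) := by
  classical
  rw [finrank_basisFlag, finrank_basisFlag, ← Finset.card_union_of_disjoint]
  · congr 1
    ext p
    simp only [Finset.mem_filter_univ, Finset.mem_union, Fin.castSucc_le_castSucc_iff,
      Fin.succ_le_castSucc_iff]
    rw [le_iff_eq_or_lt, eq_comm]
  · rw [Finset.disjoint_filter]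
    rintro p - rfl
    simp

theorem basisFlag_le_comap_iff {M' ι' : Type*} [AddCommGroup M'] [Module K M'] [Fintype ι]
    [DecidableEq ι] [Finite ι'] {b : Module.Basis ι K M} {b' : Module.Basis ι' K M'}
    {deg : ι → Fin (n + 1)} {deg' : ι' → Fin (n + 1)} {f : M →ₗ[K] M'} :
    (∀ l : Fin (n + 1), basisFlag b deg l.castSucc ≤ (basisFlag b' deg' l.succ).comap f) ↔
      ∀ p q, LinearMap.toMatrix b b' f p q ≠ 0 → deg q < deg' p := by
  simp only [LinearMap.toMatrix_apply]
  refine ⟨fun h p q hpq => ?_, fun h l => Submodule.span_le.mpr ?_⟩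
  · have : f (b q) ∈ basisFlag b' deg' (deg q).succ :=
      h (deg q) (Submodule.subset_span ⟨q, Set.mem_ofPred.mpr le_rfl, rfl⟩)
    exact Fin.succ_le_castSucc_iff.mp (mem_basisFlag.mp this p hpq)
  · rintro _ ⟨q, hq, rfl⟩
    refine mem_basisFlag.mpr fun p hpq => Fin.succ_le_castSucc_iff.mpr ?_
    exact (Fin.castSucc_le_castSucc_iff.mp hq).trans_lt (h p q hpq)

theorem exists_span_sup_eq [Module.Finite K M] {A B : Submodule K M} (hBA : B ≤ A) {κ : Type*}
    [Fintype κ] (hκ : Module.finrank K A = Fintype.card κ + Module.finrank K B) :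
    ∃ w : κ → M, B ⊔ Submodule.span K (Set.range w) = A := by
  obtain ⟨C, hdisj, rfl⟩ := IsModularLattice.exists_disjoint_and_sup_eq hBA
  have hC : Module.finrank K C = Fintype.card κ := by
    have := Submodule.finrank_sup_add_finrank_inf_eq B C
    rw [hdisj.eq_bot, finrank_bot] at this
    omega
  let b := (Module.finBasisOfFinrankEq K C hC).reindex (Fintype.equivFin κ).symm
  refine ⟨fun k => b k, ?_⟩
  rw [show (fun k => (b k : M)) = C.subtype ∘ b from rfl, Set.range_comp, ← Submodule.map_span,
    b.span_eq, Submodule.map_top, Submodule.range_subtype]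

theorem exists_basis_basisFlag_eq [Module.Finite K M] [Fintype ι]
    {F : Fin (n + 2) → Submodule K M} (hF : Antitone F) (h0 : F 0 = ⊤) (hlast : F (Fin.last _) = ⊥)
    {deg : ι → Fin (n + 1)} (hdeg : ∀ l : Fin (n + 1), Module.finrank K (F l.castSucc) =
      #{p | deg p = l} + Module.finrank K (F l.succ)) :
    ∃ b : Module.Basis ι K M, ∀ l, basisFlag b deg l = F l := by
  have exists_layer (l : Fin (n + 1)) : ∃ w : {p // deg p = l} → M,
      F l.succ ⊔ Submodule.span K (Set.range w) = F l.castSucc :=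
    exists_span_sup_eq (hF l.castSucc_le_succ) (by rw [hdeg, Fintype.card_subtype])
  choose w hw using exists_layer
  let v : ι → M := fun p => w (deg p) ⟨p, rfl⟩
  have v_mem (p) : v p ∈ F (deg p).castSucc := by
    rw [← hw]
    exact Submodule.mem_sup_right (Submodule.subset_span ⟨_, rfl⟩)
  have le_span (l) : F l ≤ Submodule.span K (v '' {p | l ≤ (deg p).castSucc}) := by
    induction l using Fin.reverseInduction with
    | last => simp [hlast]
    | cast l ih =>
      rw [← hw]
      refine sup_le (ih.trans (Submodule.span_mono (Set.image_mono fun p hp =>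
        l.castSucc_le_succ.trans hp))) (Submodule.span_mono ?_)
      rintro _ ⟨⟨p, rfl⟩, rfl⟩
      exact ⟨p, Set.mem_ofPred.mpr le_rfl, rfl⟩
  have card_eq : Fintype.card ι = Module.finrank K M := by
    have := sum_eq_of_telescoping (f := fun l => Module.finrank K (F l)) hdeg
      (by rw [hlast, finrank_bot])
    rw [h0, finrank_top] at this
    rw [← this, ← Finset.card_univ]
    exact Finset.card_eq_sum_card_fiberwise fun _ _ => Finset.mem_univ _
  have span_v : ⊤ ≤ Submodule.span K (Set.range v) := by
    simpa [h0] using le_span 0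
  let b := basisOfTopLeSpanOfCardEqFinrank v span_v card_eq
  refine ⟨b, fun l => le_antisymm (Submodule.span_le.mpr ?_) ?_⟩
  · rintro _ ⟨p, hp, rfl⟩
    simpa [b] using hF hp (v_mem p)
  · simpa [basisFlag, b] using le_span l

end AdaptedBases

namespace QuiverData

section VertexFiltrations

variable {Q : QuiverData} {d : Fin Q.n → ℕ} {L : ℕ}

/-- The matrix by which the arrow `a` acts in the representation with coordinates `x`. -/
def arrowMatrix {R : Type*} (x : Coords Q d → R) (a : Fin Q.numArrows) :
    Matrix (Fin (d (Q.tgt a))) (Fin (d (Q.src a))) R :=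
  Matrix.of fun v w => x ⟨a, (v, w)⟩

variable {K : Type} [Field K]

/-- The coordinates of an element of the carrier space at the vertex `i`. -/
def component (i : Fin Q.n) : Carrier Q d K →ₗ[K] (Fin (d i) → K) :=
  LinearMap.funLeft K K (Sigma.mk (β := fun i => Fin (d i)) i)

@[simp]
theorem component_apply (i : Fin Q.n) (m : Carrier Q d K) (v : Fin (d i)) :
    component i m v = m ⟨i, v⟩ :=
  rfl

theorem component_surjective (i : Fin Q.n) :
    Function.Surjective (component (d := d) (K := K) i) :=
  LinearMap.funLeft_surjective_of_injective K K _ sigma_mk_injective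

theorem component_proj_self (i : Fin Q.n) (m : Carrier Q d K) :
    component i (proj Q d K i m) = component i m := by
  ext
  simp [proj]

theorem component_proj_of_ne {i j : Fin Q.n} (h : j ≠ i) (m : Carrier Q d K) :
    component j (proj Q d K i m) = 0 := by
  ext
  simp [proj, h]

theorem component_arrowMap_tgt (x : RepSpace Q d K) (a : Fin Q.numArrows) (m : Carrier Q d K) :
    component (Q.tgt a) (arrowMap Q d K x a m) =
      (arrowMatrix x a).mulVec (component (Q.src a) m) := by
  ext
  simp [arrowMap, arrowMatrix, Matrix.mulVec, dotProduct]

theorem component_arrowMap_of_ne {i : Fin Q.n} {a : Fin Q.numArrows} (h : i ≠ Q.tgt a)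
    (x : RepSpace Q d K) (m : Carrier Q d K) : component i (arrowMap Q d K x a m) = 0 := by
  ext
  simp [arrowMap, h]

theorem sum_proj (m : Carrier Q d K) : ∑ i, proj Q d K i m = m := by
  ext
  simp [proj]

theorem proj_eq_extendByZero_comp_component (i : Fin Q.n) :
    proj Q d K i =
      Function.ExtendByZero.linearMap K (Sigma.mk (β := fun i => Fin (d i)) i) ∘ₗ component i := by
  ext m ⟨j, v⟩
  by_cases h : j = i
  · subst h
    simp [proj, sigma_mk_injective.extend_apply]
  · have : ¬∃ w, (⟨i, w⟩ : Σ i, Fin (d i)) = ⟨j, v⟩ := by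
      rintro ⟨w, hw⟩
      exact h (congrArg Sigma.fst hw).symm
    simp [proj, h, Function.extend_apply' _ _ _ this]

theorem vdim_eq_finrank_map_component (N : Submodule K (Carrier Q d K)) (i : Fin Q.n) :
    vdim Q d K N i = Module.finrank K (N.map (component i)) := by
  rw [vdim, proj_eq_extendByZero_comp_component, Submodule.map_comp]
  exact (Submodule.equivMapOfInjective _
    (Function.extend_injective sigma_mk_injective (0 : (Σ i, Fin (d i)) → K)) _).finrank_eq.symm

theorem mem_of_forall_component_mem {N : Submodule K (Carrier Q d K)}
    (hN : ∀ i, N.map (proj Q d K i) ≤ N) {m : Carrier Q d K}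
    (hm : ∀ i, component i m ∈ N.map (component i)) : m ∈ N := by
  rw [← sum_proj m]
  refine Submodule.sum_mem _ fun i _ => ?_
  obtain ⟨u, hu, hum⟩ := hm i
  rw [proj_eq_extendByZero_comp_component, LinearMap.comp_apply, ← hum, ← LinearMap.comp_apply,
    ← proj_eq_extendByZero_comp_component]
  exact hN i ⟨u, hu, rfl⟩

/-- The vertex-graded subspace of the carrier space with prescribed components. -/
def gradedSubmodule (W : ∀ i, Submodule K (Fin (d i) → K)) : Submodule K (Carrier Q d K) :=
  ⨅ i, (W i).comap (component i)

theorem mem_gradedSubmodule {W : ∀ i, Submodule K (Fin (d i) → K)} {m : Carrier Q d K} :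
    m ∈ gradedSubmodule W ↔ ∀ i, component i m ∈ W i := by
  simp [gradedSubmodule]

theorem map_proj_gradedSubmodule (W : ∀ i, Submodule K (Fin (d i) → K)) (i : Fin Q.n) :
    (gradedSubmodule W).map (proj Q d K i) ≤ gradedSubmodule W := by
  rintro _ ⟨m, hm, rfl⟩
  refine mem_gradedSubmodule.mpr fun j => ?_
  by_cases h : j = i
  · subst h
    rw [component_proj_self]
    exact mem_gradedSubmodule.mp hm j
  · rw [component_proj_of_ne h]
    exact zero_mem _

theorem map_component_gradedSubmodule (W : ∀ i, Submodule K (Fin (d i) → K)) (i : Fin Q.n) :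
    (gradedSubmodule W).map (component i) = W i := by
  refine le_antisymm (Submodule.map_le_iff_le_comap.mpr (iInf_le _ i)) fun w hw => ?_
  obtain ⟨m, rfl⟩ := component_surjective i w
  refine ⟨proj Q d K i m, mem_gradedSubmodule.mpr fun j => ?_, component_proj_self i m⟩
  by_cases h : j = i
  · subst h
    rwa [component_proj_self]
  · rw [component_proj_of_ne h]
    exact zero_mem _

/-- The vertexwise form of `Governed`: a filtration governed by `S`, given by its components
`W l i` at the vertices of the quiver. The field of coefficients may live in any universe. -/
structure IsVertexFiltration {K : Type*} [Field K] (x : Coords Q d → K)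
    (S : Fin (L + 1) → Fin Q.n → ℕ) (W : Fin (L + 2) → ∀ i, Submodule K (Fin (d i) → K)) :
    Prop where
  zero_eq_top : W 0 = ⊤
  last_eq_bot : W (Fin.last (L + 1)) = ⊥
  antitone : Antitone W
  mulVec_mem : ∀ (l : Fin (L + 1)) a, ∀ w ∈ W l.castSucc (Q.src a),
    (arrowMatrix x a).mulVec w ∈ W l.succ (Q.tgt a)
  finrank_castSucc : ∀ (l : Fin (L + 1)) i,
    Module.finrank K (W l.castSucc i) = S l i + Module.finrank K (W l.succ i)

theorem Governed.isVertexFiltration {x : RepSpace Q d K} {S : Fin (L + 1) → Fin Q.n → ℕ}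
    {F : Fin (L + 2) → Submodule K (Carrier Q d K)} (hF : Governed Q d K L x S F) :
    IsVertexFiltration x S fun l i => (F l).map (component i) := by
  obtain ⟨h0, hlast, hle, -, harrow, hdim⟩ := hF
  refine ⟨?_, ?_, fun l l' h i => Submodule.map_mono (Fin.antitone_iff_succ_le.mpr hle h), ?_, ?_⟩
  · ext1 i
    rw [h0, Submodule.map_top, LinearMap.range_eq_top.mpr (component_surjective i), Pi.top_apply]
  · ext1 i
    rw [hlast, Submodule.map_bot, Pi.bot_apply]
  · rintro l a _ ⟨m, hm, rfl⟩
    exact ⟨_, harrow l a ⟨m, hm, rfl⟩, component_arrowMap_tgt x a m⟩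
  · intro l i
    simpa only [vdim_eq_finrank_map_component] using hdim l i

theorem IsVertexFiltration.governed {x : RepSpace Q d K} {S : Fin (L + 1) → Fin Q.n → ℕ}
    {W : Fin (L + 2) → ∀ i, Submodule K (Fin (d i) → K)} (hW : IsVertexFiltration x S W) :
    Governed Q d K L x S fun l => gradedSubmodule (W l) := by
  refine ⟨?_, ?_, fun l m hm => ?_, fun l i => map_proj_gradedSubmodule (W l) i, ?_, fun l i => ?_⟩
  · refine eq_top_iff.mpr fun m _ => mem_gradedSubmodule.mpr fun i => ?_
    rw [hW.zero_eq_top]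
    trivial
  · refine eq_bot_iff.mpr fun m hm => ?_
    beta_reduce at hm
    rw [hW.last_eq_bot] at hm
    exact funext fun ⟨i, v⟩ => congrFun ((Submodule.mem_bot K).mp (mem_gradedSubmodule.mp hm i)) v
  · exact mem_gradedSubmodule.mpr fun i =>
      hW.antitone l.castSucc_le_succ i (mem_gradedSubmodule.mp hm i)
  · rintro l a _ ⟨m, hm, rfl⟩
    refine mem_gradedSubmodule.mpr fun i => ?_
    by_cases h : i = Q.tgt a
    · subst h
      rw [component_arrowMap_tgt]
      exact hW.mulVec_mem l a _ (mem_gradedSubmodule.mp hm _)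
    · rw [component_arrowMap_of_ne h]
      exact zero_mem _
  · rw [vdim_eq_finrank_map_component, vdim_eq_finrank_map_component,
      map_component_gradedSubmodule, map_component_gradedSubmodule, hW.finrank_castSucc]

theorem mem_filtSet_iff_exists_isVertexFiltration {x : RepSpace Q d K}
    {S : Fin (L + 1) → Fin Q.n → ℕ} :
    x ∈ FiltSet Q d K L S ↔ ∃ W, IsVertexFiltration x S W :=
  ⟨fun ⟨_, hF⟩ => ⟨_, hF.isVertexFiltration⟩, fun ⟨_, hW⟩ => ⟨_, hW.governed⟩⟩

theorem IsVertexFiltration.reduce {E : Type*} [Field E] {V : ValuationSubring E}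
    {x : Coords Q d → V} {S : Fin (L + 1) → Fin Q.n → ℕ}
    {W : Fin (L + 2) → ∀ i, Submodule E (Fin (d i) → E)}
    (hW : IsVertexFiltration (V.subtype ∘ x) S W) :
    IsVertexFiltration (IsLocalRing.residue V ∘ x) S fun l i => reduceSubmodule V (W l i) where
  zero_eq_top := by
    ext1 i
    rw [hW.zero_eq_top, Pi.top_apply, reduceSubmodule_top, Pi.top_apply]
  last_eq_bot := by
    ext1 i
    rw [hW.last_eq_bot, Pi.bot_apply, reduceSubmodule_bot, Pi.bot_apply]
  antitone _ _ h i := reduceSubmodule_mono (hW.antitone h i)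
  mulVec_mem l a _ := mulVec_mem_reduceSubmodule (A := arrowMatrix x a) (hW.mulVec_mem l a)
  finrank_castSucc l i := by
    simpa only [finrank_reduceSubmodule] using hW.finrank_castSucc l i

theorem residue_mem_filtSet {E : Type} [Field E] {V : ValuationSubring E} {x : Coords Q d → V}
    {S : Fin (L + 1) → Fin Q.n → ℕ} (hx : V.subtype ∘ x ∈ FiltSet Q d E L S) :
    IsLocalRing.residue V ∘ x ∈ FiltSet Q d (IsLocalRing.ResidueField V) L S := by
  obtain ⟨W, hW⟩ := mem_filtSet_iff_exists_isVertexFiltration.mp hx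
  exact mem_filtSet_iff_exists_isVertexFiltration.mpr ⟨_, hW.reduce⟩

end VertexFiltrations

section Parametrization

variable {Q : QuiverData} {d : Fin Q.n → ℕ} {L : ℕ}

theorem isVertexFiltration_basisFlag_iff {K : Type*} [Field K] {x : Coords Q d → K}
    {S : Fin (L + 1) → Fin Q.n → ℕ} {deg : ∀ i, Fin (d i) → Fin (L + 1)}
    (hdeg : ∀ l i, #{p | deg i p = l} = S l i)
    (b : ∀ i, Module.Basis (Fin (d i)) K (Fin (d i) → K)) :
    IsVertexFiltration x S (fun l i => basisFlag (b i) (deg i) l) ↔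
      ∀ a p q, LinearMap.toMatrix (b (Q.src a)) (b (Q.tgt a)) (arrowMatrix x a).toLin' p q ≠ 0 →
        deg (Q.src a) q < deg (Q.tgt a) p := by
  simp only [← basisFlag_le_comap_iff]
  refine ⟨fun h a l w hw => h.mulVec_mem l a w hw, fun h => ⟨?_, ?_, ?_, ?_, ?_⟩⟩
  · exact funext fun i => basisFlag_zero (b i) (deg i)
  · exact funext fun i => basisFlag_last (b i) (deg i)
  · exact fun _ _ hl i => basisFlag_antitone (b i) (deg i) hl
  · exact fun l a w hw => h a l hw
  · intro l i
    rw [finrank_basisFlag_castSucc, hdeg]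

theorem mem_filtSet_iff_exists_basis {K : Type} [Field K] {x : RepSpace Q d K}
    {S : Fin (L + 1) → Fin Q.n → ℕ} {deg : ∀ i, Fin (d i) → Fin (L + 1)}
    (hdeg : ∀ l i, #{p | deg i p = l} = S l i) :
    x ∈ FiltSet Q d K L S ↔ ∃ b : ∀ i, Module.Basis (Fin (d i)) K (Fin (d i) → K),
      ∀ a p q, LinearMap.toMatrix (b (Q.src a)) (b (Q.tgt a)) (arrowMatrix x a).toLin' p q ≠ 0 →
        deg (Q.src a) q < deg (Q.tgt a) p := by
  rw [mem_filtSet_iff_exists_isVertexFiltration]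
  refine ⟨fun ⟨W, hW⟩ => ?_, fun ⟨b, hb⟩ => ⟨_, (isVertexFiltration_basisFlag_iff hdeg b).mpr hb⟩⟩
  have exists_basis (i) : ∃ b : Module.Basis (Fin (d i)) K (Fin (d i) → K),
      ∀ l, basisFlag b (deg i) l = W l i :=
    exists_basis_basisFlag_eq (fun _ _ h => hW.antitone h i) (congrFun hW.zero_eq_top i)
      (congrFun hW.last_eq_bot i) fun l => by rw [hdeg, hW.finrank_castSucc]
  choose b hb using exists_basis
  refine ⟨b, (isVertexFiltration_basisFlag_iff hdeg b).mp ?_⟩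
  simpa only [hb] using hW

theorem mem_filtSet_iff_exists_conj {K : Type} [Field K] {x : RepSpace Q d K}
    {S : Fin (L + 1) → Fin Q.n → ℕ} {deg : ∀ i, Fin (d i) → Fin (L + 1)}
    (hdeg : ∀ l i, #{p | deg i p = l} = S l i) :
    x ∈ FiltSet Q d K L S ↔ ∃ B : ∀ i, Matrix (Fin (d i)) (Fin (d i)) K,
      (∀ i, IsUnit (B i).det) ∧
      ∀ a p q, ((B (Q.tgt a))⁻¹ * arrowMatrix x a * B (Q.src a)) p q ≠ 0 →
        deg (Q.src a) q < deg (Q.tgt a) p := by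
  have toMatrix_eq (b : ∀ i, Module.Basis (Fin (d i)) K (Fin (d i) → K)) (a) :
      LinearMap.toMatrix (b (Q.src a)) (b (Q.tgt a)) (arrowMatrix x a).toLin' =
        ((Pi.basisFun K _).toMatrix (b (Q.tgt a)))⁻¹ * arrowMatrix x a *
          (Pi.basisFun K _).toMatrix (b (Q.src a)) := by
    rw [← basis_toMatrix_mul_linearMap_toMatrix_mul_basis_toMatrix (b (Q.src a))
      (Pi.basisFun K _) (b (Q.tgt a)) (Pi.basisFun K _), ← Matrix.toLin_eq_toLin',
      LinearMap.toMatrix_toLin, Matrix.inv_eq_left_inv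
        (Module.Basis.toMatrix_mul_toMatrix_flip (b (Q.tgt a)) (Pi.basisFun K _))]
  rw [mem_filtSet_iff_exists_basis hdeg]
  constructor
  · rintro ⟨b, hb⟩
    refine ⟨fun i => (Pi.basisFun K _).toMatrix (b i), fun i => ?_, fun a => ?_⟩
    · exact Matrix.isUnit_det_of_left_inverse
        (Module.Basis.toMatrix_mul_toMatrix_flip (b i) (Pi.basisFun K _))
    · exact toMatrix_eq b a ▸ hb a
  · rintro ⟨B, hdet, hB⟩
    choose b hb using fun i => exists_basis_toMatrix_eq (hdet i)
    exact ⟨b, fun a => by simpa only [toMatrix_eq, hb] using hB a⟩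

/-- The coordinates of the parametrization of `FiltSet`: a square matrix at every vertex and a
matrix at every arrow. -/
abbrev ParamIdx (Q : QuiverData) (d : Fin Q.n → ℕ) :=
  (Σ i : Fin Q.n, Fin (d i) × Fin (d i)) ⊕ Coords Q d

variable {R R' : Type*} [CommRing R] [CommRing R']

/-- The matrix at the vertex `i`; when invertible, its columns are a basis adapted to a
filtration. -/
def frame (y : ParamIdx Q d → R) (i : Fin Q.n) : Matrix (Fin (d i)) (Fin (d i)) R :=
  Matrix.of fun v w => y (Sum.inl ⟨i, (v, w)⟩)

/-- The matrix at the arrow `a`, with every entry that does not raise the degree replaced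
by zero. -/
def degreeRaising (deg : ∀ i, Fin (d i) → Fin (L + 1)) (y : ParamIdx Q d → R)
    (a : Fin Q.numArrows) : Matrix (Fin (d (Q.tgt a))) (Fin (d (Q.src a))) R :=
  Matrix.of fun p q =>
    if deg (Q.src a) q < deg (Q.tgt a) p then y (Sum.inr ⟨a, (p, q)⟩) else 0

/-- The product of the determinants of the frames. -/
def frameDet (y : ParamIdx Q d → R) : R :=
  ∏ i, (frame y i).det

/-- The representation given by degree raising matrices with respect to the frames. The adjugate
stands in for the inverse, from which it differs by a unit factor, so that the coordinates are
polynomials. -/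
def filtParam (deg : ∀ i, Fin (d i) → Fin (L + 1)) (y : ParamIdx Q d → R) : Coords Q d → R :=
  fun t => (frame y (Q.tgt t.1) * degreeRaising deg y t.1 * (frame y (Q.src t.1)).adjugate)
    t.2.1 t.2.2

theorem frame_comp (φ : R →+* R') (y : ParamIdx Q d → R) (i : Fin Q.n) :
    frame (φ ∘ y) i = φ.mapMatrix (frame y i) :=
  rfl

theorem map_frameDet (φ : R →+* R') (y : ParamIdx Q d → R) :
    φ (frameDet y) = frameDet (φ ∘ y) := by
  simp only [frameDet, map_prod, RingHom.map_det, frame_comp]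

theorem map_filtParam (φ : R →+* R') (deg : ∀ i, Fin (d i) → Fin (L + 1)) (y : ParamIdx Q d → R)
    (t : Coords Q d) : φ (filtParam deg y t) = filtParam deg (φ ∘ y) t := by
  have map_degreeRaising (a) : (degreeRaising deg y a).map φ = degreeRaising deg (φ ∘ y) a := by
    ext p q
    simp [degreeRaising, apply_ite φ]
  rw [filtParam, ← Matrix.map_apply (f := φ), Matrix.map_mul, Matrix.map_mul, map_degreeRaising,
    filtParam, frame_comp, frame_comp, ← RingHom.map_adjugate]
  rfl

theorem arrowMatrix_filtParam (deg : ∀ i, Fin (d i) → Fin (L + 1)) (y : ParamIdx Q d → R)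
    (a : Fin Q.numArrows) : arrowMatrix (filtParam deg y) a =
      frame y (Q.tgt a) * degreeRaising deg y a * (frame y (Q.src a)).adjugate :=
  rfl

theorem mem_filtSet_iff_exists_filtParam {K : Type} [Field K] {x : RepSpace Q d K}
    {S : Fin (L + 1) → Fin Q.n → ℕ} {deg : ∀ i, Fin (d i) → Fin (L + 1)}
    (hdeg : ∀ l i, #{p | deg i p = l} = S l i) :
    x ∈ FiltSet Q d K L S ↔
      ∃ y : ParamIdx Q d → K, frameDet y ≠ 0 ∧ filtParam deg y = x := by
  simp only [frameDet, Finset.prod_ne_zero_iff, Finset.mem_univ, true_imp_iff,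
    mem_filtSet_iff_exists_conj hdeg]
  constructor
  · rintro ⟨B, hdet, hB⟩
    let N a := (B (Q.src a)).det⁻¹ • ((B (Q.tgt a))⁻¹ * arrowMatrix x a * B (Q.src a))
    let y : ParamIdx Q d → K :=
      Sum.elim (fun t => B t.1 t.2.1 t.2.2) fun t => N t.1 t.2.1 t.2.2
    have degreeRaising_y (a) : degreeRaising deg y a = N a := by
      ext p q
      by_cases h : deg (Q.src a) q < deg (Q.tgt a) p
      · simp [degreeRaising, h, y]
      · have := not_imp_comm.mp (hB a p q) h
        simp [degreeRaising, h, N, this]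
    refine ⟨y, fun i => (hdet i).ne_zero, funext fun ⟨a, p, q⟩ => ?_⟩
    change arrowMatrix (filtParam deg y) a p q = arrowMatrix x a p q
    have frame_y (i) : frame y i = B i := rfl
    rw [arrowMatrix_filtParam, degreeRaising_y, frame_y, frame_y]
    have : B (Q.tgt a) * N a * (B (Q.src a)).adjugate = arrowMatrix x a := by
      simp only [N, Matrix.mul_smul, Matrix.smul_mul, Matrix.mul_assoc, Matrix.mul_adjugate]
      simp [Matrix.mul_nonsing_inv_cancel_left _ _ (hdet (Q.tgt a)), (hdet (Q.src a)).ne_zero]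
    rw [this]
  · rintro ⟨y, hy, rfl⟩
    refine ⟨frame y, fun i => (hy i).isUnit, fun a p q hpq => ?_⟩
    have : (frame y (Q.tgt a))⁻¹ * arrowMatrix (filtParam deg y) a * frame y (Q.src a) =
        (frame y (Q.src a)).det • degreeRaising deg y a := by
      rw [arrowMatrix_filtParam, Matrix.mul_assoc, Matrix.mul_assoc, Matrix.mul_assoc,
        Matrix.adjugate_mul, Matrix.nonsing_inv_mul_cancel_left _ _ (hy _).isUnit]
      simp
    rw [this] at hpq
    by_contra h
    simp [degreeRaising, h] at hpq

variable {K : Type} [Field K] {S : Fin (L + 1) → Fin Q.n → ℕ}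

theorem exists_deg_of_hasDimVec (hS : hasDimVec S d) :
    ∃ deg : ∀ i, Fin (d i) → Fin (L + 1), ∀ l i, #{p | deg i p = l} = S l i := by
  choose deg hdeg using fun i =>
    exists_fun_card_fiber_eq (ι := Fin (d i)) (by rw [hS, Fintype.card_fin])
  exact ⟨deg, fun l i => hdeg i l⟩

theorem filtSet_eq_image_eval {deg : ∀ i, Fin (d i) → Fin (L + 1)}
    (hdeg : ∀ l i, #{p | deg i p = l} = S l i) :
    FiltSet Q d K L S =
      (fun y t => MvPolynomial.eval y (filtParam deg MvPolynomial.X t)) ''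
        {y : ParamIdx Q d → K | MvPolynomial.eval y (frameDet MvPolynomial.X) ≠ 0} := by
  have eval_comp_X (y : ParamIdx Q d → K) : MvPolynomial.eval y ∘ MvPolynomial.X = y :=
    funext fun t => MvPolynomial.eval_X t
  simp only [map_filtParam, map_frameDet, eval_comp_X]
  exact Set.ext fun x => mem_filtSet_iff_exists_filtParam hdeg

theorem frameDet_X_ne_zero :
    frameDet (MvPolynomial.X : ParamIdx Q d → MvPolynomial (ParamIdx Q d) K) ≠ 0 := by
  let y : ParamIdx Q d → K :=
    Sum.elim (fun t => (1 : Matrix (Fin (d t.1)) (Fin (d t.1)) K) t.2.1 t.2.2) 0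
  have frame_y (i) : frame y i = 1 := rfl
  intro h
  have := map_frameDet (MvPolynomial.eval y) MvPolynomial.X
  rw [h, map_zero, show MvPolynomial.eval y ∘ MvPolynomial.X = y from
    funext fun t => MvPolynomial.eval_X t] at this
  simp [frameDet, frame_y] at this

theorem isIrreducible_filtSet [Infinite K] (hS : hasDimVec S d) :
    IsIrreducible (FiltSet Q d K L S) := by
  obtain ⟨deg, hdeg⟩ := exists_deg_of_hasDimVec hS
  rw [filtSet_eq_image_eval hdeg]
  let _ := zariskiTopology (ParamIdx Q d) K
  exact (isIrreducible_setOf_eval_ne_zero frameDet_X_ne_zero).image _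
    (continuous_eval_family _).continuousOn

theorem isClosed_filtSet [IsAlgClosed K] (hS : hasDimVec S d) :
    IsClosed (FiltSet Q d K L S) := by
  obtain ⟨deg, hdeg⟩ := exists_deg_of_hasDimVec hS
  rw [filtSet_eq_image_eval hdeg]
  refine isClosed_image_of_valuative _ _ fun E _ V j y v hq hf => ?_
  have eval₂_comp_X {A : Type} [CommRing A] (φ : K →+* A) (y : ParamIdx Q d → A) :
      MvPolynomial.eval₂Hom φ y ∘ MvPolynomial.X = y :=
    funext fun t => MvPolynomial.eval₂_X φ y t
  simp only [← MvPolynomial.coe_eval₂Hom, map_filtParam, map_frameDet, eval₂_comp_X] at hq hf ⊢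
  have hv : V.subtype ∘ v ∈ FiltSet Q d E L S :=
    (mem_filtSet_iff_exists_filtParam hdeg).mpr ⟨y, hq, funext hf⟩
  obtain ⟨y', hq', hf'⟩ := (mem_filtSet_iff_exists_filtParam hdeg).mp (residue_mem_filtSet hv)
  exact ⟨y', hq', congrFun hf'⟩

end Parametrization

section RadicalFiltration

variable {Q : QuiverData} {d : Fin Q.n → ℕ} {K : Type} [Field K] {L : ℕ} {x : RepSpace Q d K}
  {S : Fin (L + 1) → Fin Q.n → ℕ} {F : Fin (L + 2) → Submodule K (Carrier Q d K)}

theorem vdim_mono {N N' : Submodule K (Carrier Q d K)} (h : N ≤ N') (i : Fin Q.n) :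
    vdim Q d K N i ≤ vdim Q d K N' i :=
  Submodule.finrank_mono (Submodule.map_mono h)

theorem vdim_top (i : Fin Q.n) : vdim Q d K ⊤ i = d i := by
  rw [vdim_eq_finrank_map_component, Submodule.map_top,
    LinearMap.range_eq_top.mpr (component_surjective i), finrank_top, Module.finrank_fin_fun]

theorem vdim_bot (i : Fin Q.n) : vdim Q d K ⊥ i = 0 := by
  rw [vdim, Submodule.map_bot, finrank_bot]

theorem eq_of_le_of_vdim_eq {N N' : Submodule K (Carrier Q d K)}
    (hN : ∀ i, N.map (proj Q d K i) ≤ N) (hle : N ≤ N')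
    (hdim : ∀ i, vdim Q d K N i = vdim Q d K N' i) : N = N' := by
  refine le_antisymm hle fun m hm => mem_of_forall_component_mem hN fun i => ?_
  have : N.map (component i) = N'.map (component i) :=
    Submodule.eq_of_le_of_finrank_eq (Submodule.map_mono hle) <| by
      rw [← vdim_eq_finrank_map_component, ← vdim_eq_finrank_map_component, hdim]
  exact this ▸ Submodule.mem_map_of_mem hm

theorem radPow_zero (x : RepSpace Q d K) : radPow Q d K x 0 = ⊤ :=
  eq_top_iff.mpr (le_iSup_of_le ⟨[], rfl⟩ LinearMap.range_id.ge)

theorem radPow_succ (x : RepSpace Q d K) (l : ℕ) :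
    radPow Q d K x (l + 1) = ⨆ a, (radPow Q d K x l).map (arrowMap Q d K x a) := by
  have range_wordMap_cons (a : Fin Q.numArrows) (w : List (Fin Q.numArrows)) :
      LinearMap.range (wordMap Q d K x (a :: w)) =
        (LinearMap.range (wordMap Q d K x w)).map (arrowMap Q d K x a) :=
    LinearMap.range_comp _ _
  simp only [radPow, Submodule.map_iSup, ← range_wordMap_cons]
  refine le_antisymm (iSup_le ?_) (iSup_le fun a => iSup_le fun w => ?_)
  · rintro ⟨_ | ⟨a, w⟩, hw⟩
    · simp at hw
    · exact le_iSup_of_le a (le_iSup_of_le ⟨w, by simpa using hw⟩ le_rfl)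
  · exact le_iSup_of_le ⟨a :: w.1, by simp [w.2]⟩ le_rfl

theorem radPow_antitone (x : RepSpace Q d K) : Antitone (radPow Q d K x) := by
  refine antitone_nat_of_succ_le fun l => ?_
  induction l with
  | zero => exact radPow_zero x ▸ le_top
  | succ l ih =>
    rw [radPow_succ x (l + 1), radPow_succ x l]
    exact iSup_mono fun a => Submodule.map_mono (radPow_succ x l ▸ ih)

theorem proj_arrowMap (x : RepSpace Q d K) (a : Fin Q.numArrows) (i : Fin Q.n)
    (m : Carrier Q d K) :
    proj Q d K i (arrowMap Q d K x a m) = if i = Q.tgt a then arrowMap Q d K x a m else 0 := by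
  ext ⟨j, v⟩
  by_cases hj : j = Q.tgt a
  · subst hj
    by_cases hi : i = Q.tgt a
    · simp [proj, hi]
    · simp [proj, hi, Ne.symm hi]
  · split_ifs <;> simp [proj, arrowMap, hj]

theorem map_proj_radPow_le (x : RepSpace Q d K) (l : ℕ) (i : Fin Q.n) :
    (radPow Q d K x l).map (proj Q d K i) ≤ radPow Q d K x l := by
  cases l with
  | zero => exact radPow_zero x ▸ le_top
  | succ l =>
    rw [radPow_succ, Submodule.map_iSup]
    refine iSup_mono fun a => ?_
    rintro _ ⟨_, ⟨m, hm, rfl⟩, rfl⟩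
    rw [proj_arrowMap]
    split_ifs
    · exact Submodule.mem_map_of_mem hm
    · exact zero_mem _

theorem mem_truncRepVar_iff : x ∈ TruncRepVar Q d K L ↔ radPow Q d K x (L + 1) = ⊥ := by
  simp only [radPow, iSup_eq_bot, LinearMap.range_eq_bot, Subtype.forall]
  rfl

theorem governed_radPow (hx : x ∈ TruncRepVar Q d K L) :
    Governed Q d K L x (radLayering Q d K L x) fun l => radPow Q d K x l := by
  refine ⟨radPow_zero x, mem_truncRepVar_iff.mp hx, fun l => radPow_antitone x (Nat.le_succ l),
    fun l => map_proj_radPow_le x l, fun l a => ?_, fun l i => ?_⟩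
  · exact (le_iSup_of_le a le_rfl).trans (radPow_succ x l).ge
  · exact (Nat.sub_add_cancel (vdim_mono (radPow_antitone x (Nat.le_succ l)) i)).symm

theorem Governed.radPow_le (hF : Governed Q d K L x S F) (l : Fin (L + 2)) :
    radPow Q d K x l ≤ F l := by
  obtain ⟨h0, -, -, -, harrow, -⟩ := hF
  induction l using Fin.induction with
  | zero => exact h0 ▸ le_top
  | succ l ih =>
    rw [Fin.val_succ, radPow_succ]
    exact iSup_le fun a => (Submodule.map_mono ih).trans (harrow l a)

theorem filtSet_subset_truncRepVar : FiltSet Q d K L S ⊆ TruncRepVar Q d K L := by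
  rintro x ⟨F, hF⟩
  rw [mem_truncRepVar_iff, eq_bot_iff, ← hF.2.1]
  exact hF.radPow_le (Fin.last (L + 1))

theorem Governed.vdim_castSucc (hF : Governed Q d K L x S F) (l : Fin (L + 1)) (i : Fin Q.n) :
    vdim Q d K (F l.castSucc) i = S l i + vdim Q d K (F l.succ) i :=
  hF.2.2.2.2.2 l i

theorem Governed.sum_Iic_add_vdim (hF : Governed Q d K L x S F) (l : Fin (L + 1)) (i : Fin Q.n) :
    ∑ j ∈ Finset.Iic l, S j i + vdim Q d K (F l.succ) i = d i := by
  rw [sum_Iic_add_eq_of_telescoping (f := fun l => vdim Q d K (F l) i)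
    (fun l => hF.vdim_castSucc l i), hF.1, vdim_top]

theorem Governed.hasDimVec (hF : Governed Q d K L x S F) : hasDimVec S d := by
  intro i
  rw [← hF.sum_Iic_add_vdim (Fin.last L) i, Fin.succ_last, hF.2.1, vdim_bot, add_zero,
    ← Fin.top_eq_last, Finset.Iic_top]

theorem Governed.dominates_radLayering (hF : Governed Q d K L x S F) :
    dominates S (radLayering Q d K L x) := by
  intro l i
  have hrad := governed_radPow (filtSet_subset_truncRepVar ⟨F, hF⟩)
  rw [Finset.filter_ge_eq_Iic]
  linarith [hF.sum_Iic_add_vdim l i, hrad.sum_Iic_add_vdim l i, vdim_mono (hF.radPow_le l.succ) i]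

theorem dominates_antisymm {n : ℕ} {S S' : Fin (L + 1) → Fin n → ℕ} (h : dominates S S')
    (h' : dominates S' S) : S = S' := by
  ext l i
  induction l using WellFoundedLT.induction with
  | ind l ih =>
    have hsum := (h l i).antisymm (h' l i)
    have hlt : ∑ j ∈ Finset.Iio l, S j i = ∑ j ∈ Finset.Iio l, S' j i :=
      Finset.sum_congr rfl fun j hj => ih j (Finset.mem_Iio.mp hj)
    rw [Finset.filter_ge_eq_Iic, ← Finset.Iio_insert, Finset.sum_insert (by simp),
      Finset.sum_insert (by simp)] at hsum
    omega

theorem Governed.eq_radPow (hF : Governed Q d K L x (radLayering Q d K L x) F)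
    (l : Fin (L + 2)) : F l = radPow Q d K x l := by
  have hrad := governed_radPow (filtSet_subset_truncRepVar ⟨F, hF⟩)
  refine (eq_of_le_of_vdim_eq (map_proj_radPow_le x l) (hF.radPow_le l) fun i => ?_).symm
  cases l using Fin.cases with
  | zero => rw [hF.1, Fin.val_zero, radPow_zero]
  | succ l => linarith [hF.sum_Iic_add_vdim l i, hrad.sum_Iic_add_vdim l i]

theorem Governed.eq_radLayering (hF : Governed Q d K L x S F)
    (h : ∀ l : Fin (L + 2), F l = radPow Q d K x l) : S = radLayering Q d K L x := by
  funext l i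
  have := hF.vdim_castSucc l i
  rw [h, h] at this
  exact (Nat.sub_eq_of_eq_add this).symm

end RadicalFiltration

section RealizableSequences

variable {Q : QuiverData} {d : Fin Q.n → ℕ} {K : Type} [Field K] {L : ℕ}

variable (Q d K L) in
/-- The realizable semisimple sequences of dimension vector `d`, i.e. the radical layerings of the
points of `TruncRepVar`. They index the strata `Rep S`. -/
abbrev RealizableSeq :=
  {S : Fin (L + 1) → Fin Q.n → ℕ // ∃ x ∈ TruncRepVar Q d K L, radLayering Q d K L x = S}

/-- The radical layering of a point of the variety, as a realizable sequence. -/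
noncomputable def radSeq (x : TruncV Q d K L) : RealizableSeq Q d K L :=
  ⟨radLayering Q d K L x.1, x.1, x.2, rfl⟩

/-- `Filt S`, for a realizable sequence `S`, as a subset of the variety. -/
def filtLocus (S : RealizableSeq Q d K L) : Set (TruncV Q d K L) :=
  Subtype.val ⁻¹' FiltSet Q d K L S.1

theorem radSeq_surjective : Function.Surjective (radSeq (Q := Q) (d := d) (K := K) (L := L)) :=
  fun ⟨_, x, hx, hS⟩ => ⟨⟨x, hx⟩, Subtype.ext hS⟩

theorem RealizableSeq.hasDimVec (S : RealizableSeq Q d K L) : hasDimVec S.1 d := by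
  obtain ⟨x, rfl⟩ := radSeq_surjective S
  exact (governed_radPow x.2).hasDimVec

instance : Finite (RealizableSeq Q d K L) := by
  refine (Set.finite_Icc 0 fun (_ : Fin (L + 1)) i => d i).subset fun S hS => ?_
  refine ⟨fun _ _ => Nat.zero_le _, fun l i => ?_⟩
  exact (RealizableSeq.hasDimVec ⟨S, hS⟩ i).le.trans' <|
    Finset.single_le_sum (f := fun l => S l i) (fun _ _ => Nat.zero_le _) (Finset.mem_univ l)

theorem mem_filtLocus_radSeq (x : TruncV Q d K L) : x ∈ filtLocus (radSeq x) :=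
  ⟨_, governed_radPow x.2⟩

theorem radSeq_eq_of_mem_filtLocus (x y : TruncV Q d K L) (hxy : x ∈ filtLocus (radSeq y))
    (hyx : y ∈ filtLocus (radSeq x)) : radSeq x = radSeq y := by
  obtain ⟨F, hF⟩ := hxy
  obtain ⟨G, hG⟩ := hyx
  exact Subtype.ext (dominates_antisymm hG.dominates_radLayering hF.dominates_radLayering)

theorem isClosed_filtLocus [IsAlgClosed K] (S : RealizableSeq Q d K L) :
    IsClosed (filtLocus S) :=
  (isClosed_filtSet S.hasDimVec).preimage continuous_subtype_val

theorem isIrreducible_filtLocus [Infinite K] (S : RealizableSeq Q d K L) :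
    IsIrreducible (filtLocus S) :=
  isIrreducible_preimage_of_isInducing Topology.IsInducing.subtypeVal
    (isIrreducible_filtSet S.hasDimVec)
    (Subtype.range_coe.symm ▸ filtSet_subset_truncRepVar)

theorem gammaCount_eq_ncard (x : TruncV Q d K L) :
    gammaCount Q d K L (TruncRepVar Q d K L) x.1 = {S | x ∈ filtLocus S}.ncard := by
  rw [← Set.ncard_image_of_injective _ Subtype.val_injective]
  refine congrArg Set.ncard (Set.ext fun S => ?_)
  exact ⟨fun ⟨hS, hx⟩ => ⟨⟨S, hS⟩, hx, rfl⟩, fun ⟨⟨_, hS⟩, hx, h⟩ => h ▸ ⟨hS, hx⟩⟩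

theorem gammaCount_eq_one_iff (x : TruncV Q d K L) :
    gammaCount Q d K L (TruncRepVar Q d K L) x.1 = 1 ↔
      ∀ S, x ∈ filtLocus S → S = radSeq x := by
  rw [gammaCount_eq_ncard, Set.ncard_eq_one]
  constructor
  · rintro ⟨S₀, h⟩ S hS
    rw [Set.ext_iff] at h
    exact ((h S).mp hS).trans ((h _).mp (mem_filtLocus_radSeq x)).symm
  · exact fun h => ⟨radSeq x, Set.ext fun S =>
      ⟨h S, fun hS => hS ▸ mem_filtLocus_radSeq x⟩⟩

theorem gammaCount_eq_one_iff_forall_eq_radPow (x : TruncV Q d K L) :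
    gammaCount Q d K L (TruncRepVar Q d K L) x.1 = 1 ↔
      ∀ (S : Fin (L + 1) → Fin Q.n → ℕ) (F : Fin (L + 2) → Submodule K (Carrier Q d K)),
        (∃ y ∈ TruncRepVar Q d K L, radLayering Q d K L y = S) → Governed Q d K L x.1 S F →
          ∀ l : Fin (L + 2), F l = radPow Q d K x.1 l := by
  rw [gammaCount_eq_one_iff]
  constructor
  · intro h S F hS hF
    have : S = radLayering Q d K L x.1 := congrArg Subtype.val (h ⟨S, hS⟩ ⟨F, hF⟩)
    exact Governed.eq_radPow (this ▸ hF)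
  · rintro h ⟨S, hS⟩ ⟨F, hF⟩
    exact Subtype.ext (hF.eq_radLayering (h S F hS hF))

theorem closure_radStratum_mem_irreducibleComponents_iff [IsAlgClosed K]
    (S : RealizableSeq Q d K L) :
    closure {x : TruncV Q d K L | radLayering Q d K L x.1 = S.1} ∈
        irreducibleComponents (TruncV Q d K L) ↔
      ∃ x ∈ TruncRepVar Q d K L, radLayering Q d K L x = S.1 ∧
        gammaCount Q d K L (TruncRepVar Q d K L) x = 1 := by
  have := IsAlgClosed.instInfinite (K := K)
  have radSeq_eq_iff (x : TruncV Q d K L) : radSeq x = S ↔ radLayering Q d K L x.1 = S.1 :=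
    Subtype.ext_iff
  simp only [← radSeq_eq_iff]
  rw [closure_fiber_mem_irreducibleComponents_iff isClosed_filtLocus isIrreducible_filtLocus
    mem_filtLocus_radSeq radSeq_eq_of_mem_filtLocus radSeq_surjective]
  constructor
  · rintro ⟨x, rfl, hx⟩
    exact ⟨x.1, x.2, rfl, (gammaCount_eq_one_iff x).mpr hx⟩
  · rintro ⟨x, hx, hS, hΓ⟩
    obtain rfl : radSeq ⟨x, hx⟩ = S := Subtype.ext hS
    exact ⟨⟨x, hx⟩, rfl, (gammaCount_eq_one_iff _).mp hΓ⟩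

end RealizableSequences

end QuiverData

open QuiverData in
/-- For a truncated path algebra `Λ`: (1) the map `x ↦ Γ(M_x)`
(counting the realizable semisimple sequences governing some filtration of `M_x`) is
upper semicontinuous on `Rep_d(Λ)`; (2) for a realizable `d`-dimensional semisimple
sequence `S`, the following are equivalent: (i) the closure of `Rep S` is an irreducible
component of `Rep_d(Λ)`; (ii) some point `x` of `Rep S` has `Γ(M_x) = 1`; (iii) some
module `G` with radical layering `S` admits the radical filtration as its only
filtration governed by a realizable semisimple sequence. (Stated as (i) ↔ (ii) and
(ii) ↔ (iii).) -/
theorem statement_17 (K : Type) [Field K] [IsAlgClosed K]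
    (Q : QuiverData) (L : ℕ) (hL : 0 < L) (d : Fin Q.n → ℕ) :
    (∀ m : ℕ, IsClosed {x : TruncV Q d K L |
        m ≤ gammaCount Q d K L (TruncRepVar Q d K L) x.1}) ∧
    ∀ S : Fin (L+1) → Fin Q.n → ℕ, hasDimVec S d →
      (∃ x ∈ TruncRepVar Q d K L, radLayering Q d K L x = S) →
      (((closure {x : TruncV Q d K L | radLayering Q d K L x.1 = S}
            ∈ irreducibleComponents (TruncV Q d K L))
          ↔ ∃ x ∈ TruncRepVar Q d K L, radLayering Q d K L x = S ∧
              gammaCount Q d K L (TruncRepVar Q d K L) x = 1) ∧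
        ((∃ x ∈ TruncRepVar Q d K L, radLayering Q d K L x = S ∧
              gammaCount Q d K L (TruncRepVar Q d K L) x = 1)
          ↔ ∃ x ∈ TruncRepVar Q d K L, radLayering Q d K L x = S ∧
              ∀ (S' : Fin (L+1) → Fin Q.n → ℕ)
                (F : Fin (L+2) → Submodule K (Carrier Q d K)),
                (∃ y ∈ TruncRepVar Q d K L, radLayering Q d K L y = S') →
                Governed Q d K L x S' F →
                ∀ l : Fin (L+2), F l = radPow Q d K x (l : ℕ))) := by
  refine ⟨fun m => ?_, fun S _ hS => ⟨?_, ?_⟩⟩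
  · simp only [gammaCount_eq_ncard]
    exact isClosed_setOf_le_ncard isClosed_filtLocus m
  · exact closure_radStratum_mem_irreducibleComponents_iff ⟨S, hS⟩
  · refine exists_congr fun x => and_congr_right fun hx => and_congr_right fun _ => ?_
    exact gammaCount_eq_one_iff_forall_eq_radPow ⟨x, hx⟩
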